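/- arXiv:2310.01394 — 2 statements merged into one kernel-verified Lean document; each statement's English description precedes it below -/
import Mathlib

section
/- For all integers n ≥ 1 and r ≥ 2, t^(r)(n) ≥ min{t0, t1, t2}, where t0 = 2·t^(r)(⌊n/3⌋), t1 = τ(⌊ℓ_{r-1}(n/(6r))⌋), and t2 = min over 2 ≤ p ≤ r−2 of max{ t^{(r−p)}(⌊ℓ_p(n/(6r))⌋), t^{(p)}(⌊ℓ_{r−p}(n/(6r))⌋) }; for r ≤ 3 the range 2 ≤ p ≤ r−2 is empty and t2 is taken to be n (so it does not affect the minimum). -/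
/-- A (sub-)matching: a finite set of pairwise disjoint `r`-element subsets
("edges") of the linearly ordered vertex set `ℕ`. -/
def IsMatching (r : ℕ) (M : Finset (Finset ℕ)) : Prop :=
  (∀ e ∈ M, e.card = r) ∧ ∀ e ∈ M, ∀ f ∈ M, e ≠ f → Disjoint e f

/-- The vertex support of a matching: the union of its edges. -/
def mSupport (M : Finset (Finset ℕ)) : Finset ℕ := M.sup id

/-- An ordered `r`-matching of size `n`: `n` pairwise disjoint `r`-element edges
partitioning `[rn] = {1, …, rn}`. -/
def IsOrderedMatching (r n : ℕ) (M : Finset (Finset ℕ)) : Prop :=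
  IsMatching r M ∧ M.card = n ∧ mSupport M = Finset.Icc 1 (r * n)

/-- Two ordered matchings are isomorphic if some (equivalently, the unique)
order-preserving bijection between their vertex supports maps edges onto edges. -/
def MatchIso (M N : Finset (Finset ℕ)) : Prop :=
  ∃ f : ℕ → ℕ, Set.BijOn f (mSupport M : Set ℕ) (mSupport N : Set ℕ) ∧
    (∀ x ∈ mSupport M, ∀ y ∈ mSupport M, x < y → f x < f y) ∧
    N = M.image fun e => e.image f

/-- `M` contains twins of size `k`: a pair of vertex-disjoint isomorphic
sub-matchings of `M`, each with `k` edges. -/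
def HasTwins (M : Finset (Finset ℕ)) (k : ℕ) : Prop :=
  ∃ M₁ M₂ : Finset (Finset ℕ), M₁ ⊆ M ∧ M₂ ⊆ M ∧
    Disjoint (mSupport M₁) (mSupport M₂) ∧ MatchIso M₁ M₂ ∧
    M₁.card = k ∧ M₂.card = k

/-- `t(M)`: the maximum size of twins in `M`. -/
noncomputable def twinMax (M : Finset (Finset ℕ)) : ℕ := sSup {k | HasTwins M k}

/-- `t^(r)(n)`: the minimum of `t(M)` over all ordered `r`-matchings of size `n`. -/
noncomputable def minTwins (r n : ℕ) : ℕ :=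
  sInf {t | ∃ M, IsOrderedMatching r n M ∧ twinMax M = t}

/-- A permutation `π` of `[n]` has twins of length `k`: two order-isomorphic
subsequences occupying disjoint sets of positions. -/
def PermTwins {n : ℕ} (π : Equiv.Perm (Fin n)) (k : ℕ) : Prop :=
  ∃ a b : Fin k → Fin n, StrictMono a ∧ StrictMono b ∧
    (∀ i j, a i ≠ b j) ∧ ∀ i j, (π (a i) < π (a j) ↔ π (b i) < π (b j))

/-- `τ(n)`: the largest `k` such that every permutation of `[n]` has twins of length `k`. -/
noncomputable def permTau (n : ℕ) : ℕ :=
  sSup {k | ∀ π : Equiv.Perm (Fin n), PermTwins π k}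

/-- An `r`-pattern, represented by its canonical representative: an ordered
`r`-matching of size `2` (on the vertex set `[2r]`). Every isomorphism class of
ordered `r`-matchings of size `2` contains exactly one such representative. -/
def IsPattern (r : ℕ) (P : Finset (Finset ℕ)) : Prop := IsOrderedMatching r 2 P

/-- A `P`-clique: a matching all of whose pairs of (distinct) edges form the pattern `P`. -/
def IsPClique (P M : Finset (Finset ℕ)) : Prop :=
  ∀ e ∈ M, ∀ f ∈ M, e ≠ f → MatchIso {e, f} P

/-- `L(M)`: the size of the largest sub-matching of `M` that is a `P`-clique,
over all `r`-patterns `P`. -/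
noncomputable def cliqueMax (r : ℕ) (M : Finset (Finset ℕ)) : ℕ :=
  sSup {k | ∃ P, IsPattern r P ∧ ∃ M' ⊆ M, IsPClique P M' ∧ M'.card = k}

/-- `L_r(n)`: the minimum of `L(M)` over all ordered `r`-matchings of size `n`. -/
noncomputable def minClique (r n : ℕ) : ℕ :=
  sInf {l | ∃ M, IsOrderedMatching r n M ∧ cliqueMax r M = l}

/-- `ℓ_s(x)`: `ℓ_2(x) = x^{1/3}` and `ℓ_s(x) = (1/2)·x^{1/(2^s-1)}` for `s ≥ 3`. -/
noncomputable def ell (s : ℕ) (x : ℝ) : ℝ :=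
  if s = 2 then x ^ ((1 : ℝ) / 3) else (1 / 2) * x ^ ((1 : ℝ) / ((2 : ℝ) ^ s - 1))

/-!
Let `K` be the argument of `τ`.

Suppose first that `r ≤ 3`, and cut an ordered `r`-matching at a point with a third of its edges
to the left of it. If another third lies to the right, twins from both sides combine into twins of
twice the size. Otherwise a third of the edges cross the cut, and a constant proportion of these
leave a single vertex on the same side of it. Mirsky's theorem makes the remaining `r - 1 ≤ 2`
vertices of `K` such edges a clique. The pattern of two of these `K` edges is then determined by
the order of their isolated vertices and the order of the other parts, that is, by a permutation
of `[K]`, and twins in this permutation are twins in the matching.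

For `r ≥ 4` a pigeonhole argument already yields twins of size `⌊K / 2⌋ ≥ τ(K)`: cut the vertex set
into equal cells. Few edges have a vector of cells shared with no other edge, and few edges meet
the cells of a given edge, so there are many edges that meet pairwise disjoint sets of cells and
all have a partner with the same cells. Replacing every edge by its partner changes no comparison
between vertices of different edges.
-/

open Finset

section Isomorphism

variable {M N P L R : Finset (Finset ℕ)} {r n k : ℕ}

lemma mem_mSupport {x : ℕ} : x ∈ mSupport M ↔ ∃ e ∈ M, x ∈ e := by
  simp [mSupport, mem_sup]

lemma subset_mSupport {e : Finset ℕ} (he : e ∈ M) : e ⊆ mSupport M :=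
  fun _ hx => mem_mSupport.2 ⟨e, he, hx⟩

lemma mSupport_mono (h : M ⊆ N) : mSupport M ⊆ mSupport N := sup_mono h

lemma mSupport_union : mSupport (M ∪ N) = mSupport M ∪ mSupport N := sup_union

lemma mSupport_image_image (f : ℕ → ℕ) :
    mSupport (M.image (image f)) = (mSupport M).image f := by
  ext x
  simp only [mem_mSupport, mem_image]
  grind

lemma IsMatching.subset (hM : IsMatching r M) (h : N ⊆ M) : IsMatching r N :=
  ⟨fun e he => hM.1 e (h he), fun e he f hf => hM.2 e (h he) f (h hf)⟩

lemma IsMatching.pairwiseDisjoint (hM : IsMatching r M) :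
    (M : Set (Finset ℕ)).PairwiseDisjoint id :=
  fun e he f hf hef => hM.2 e he f hf hef

lemma IsMatching.nonempty (hM : IsMatching r M) (hr : r ≠ 0) {e : Finset ℕ} (he : e ∈ M) :
    e.Nonempty :=
  card_ne_zero.1 (hM.1 e he ▸ hr)

lemma IsMatching.card_mSupport (hM : IsMatching r M) : #(mSupport M) = r * #M := by
  rw [mSupport, sup_eq_biUnion, card_biUnion hM.pairwiseDisjoint, mul_comm]
  exact sum_const_nat hM.1

lemma IsMatching.disjoint_mSupport (hM : IsMatching r M) (hL : L ⊆ M) (hR : R ⊆ M)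
    (hLR : Disjoint L R) : Disjoint (mSupport L) (mSupport R) := by
  refine disjoint_left.2 fun x hxL hxR => ?_
  obtain ⟨e, he, hxe⟩ := mem_mSupport.1 hxL
  obtain ⟨f, hf, hxf⟩ := mem_mSupport.1 hxR
  have hef : e ≠ f := fun h => disjoint_left.1 hLR he (h ▸ hf)
  exact disjoint_left.1 (hM.2 e (hL he) f (hR hf) hef) hxe hxf

lemma matchIso_image {f : ℕ → ℕ} (hf : StrictMonoOn f (mSupport M : Set ℕ)) :
    MatchIso M (M.image (image f)) := by
  refine ⟨f, ?_, fun x hx y hy => hf hx hy, rfl⟩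
  rw [mSupport_image_image, coe_image]
  exact hf.injOn.bijOn_image

lemma MatchIso.exists_strictMonoOn (h : MatchIso M N) :
    ∃ f : ℕ → ℕ, StrictMonoOn f (mSupport M : Set ℕ) ∧ M.image (image f) = N := by
  obtain ⟨f, -, hf, hN⟩ := h
  exact ⟨f, fun x hx y hy => hf x hx y hy, hN.symm⟩

lemma MatchIso.trans (hMN : MatchIso M N) (hNP : MatchIso N P) : MatchIso M P := by
  obtain ⟨f, hf, rfl⟩ := hMN.exists_strictMonoOn
  obtain ⟨g, hg, rfl⟩ := hNP.exists_strictMonoOn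
  rw [mSupport_image_image, coe_image] at hg
  have hgf := matchIso_image (hg.comp hf (Set.mapsTo_image f _))
  simpa only [image_image, Function.comp_def] using hgf

lemma MatchIso.symm (h : MatchIso M N) : MatchIso N M := by
  obtain ⟨f, hf, rfl⟩ := h.exists_strictMonoOn
  let g := Function.invFunOn f (mSupport M : Set ℕ)
  have hgf : Set.LeftInvOn g f (mSupport M) := hf.injOn.leftInvOn_invFunOn
  have hg : StrictMonoOn g (mSupport (M.image (image f)) : Set ℕ) := by
    rw [mSupport_image_image, coe_image]
    rintro _ ⟨x, hx, rfl⟩ _ ⟨y, hy, rfl⟩ hxy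
    rw [hgf hx, hgf hy]
    exact (hf.lt_iff_lt hx hy).1 hxy
  have hM : (M.image (image f)).image (image g) = M := by
    rw [image_image]
    refine (image_congr fun e he => ?_).trans image_id
    change (e.image f).image g = e
    rw [image_image]
    exact (image_congr fun x hx => hgf (subset_mSupport he hx)).trans image_id
  simpa only [hM] using matchIso_image hg

lemma MatchIso.card_eq (h : MatchIso M N) : #M = #N := by
  obtain ⟨f, -, hf⟩ := h.exists_strictMonoOn
  obtain ⟨g, -, hg⟩ := h.symm.exists_strictMonoOn
  exact le_antisymm (hg ▸ card_image_le) (hf ▸ card_image_le)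

lemma MatchIso.isMatching (h : MatchIso M N) (hM : IsMatching r M) : IsMatching r N := by
  obtain ⟨f, hf, rfl⟩ := h.exists_strictMonoOn
  have inj : ∀ e ∈ M, Set.InjOn f e := fun e he => hf.injOn.mono (coe_subset.2 (subset_mSupport he))
  refine ⟨forall_mem_image.2 fun e he => (card_image_of_injOn (inj e he)).trans (hM.1 e he), ?_⟩
  refine forall_mem_image.2 fun e he => forall_mem_image.2 fun e' he' hne => ?_
  rw [← disjoint_coe, coe_image, coe_image]
  exact (disjoint_coe.2 (hM.2 e he e' he' (ne_of_apply_ne _ hne))).image hf.injOn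
    (coe_subset.2 (subset_mSupport he)) (coe_subset.2 (subset_mSupport he'))

lemma MatchIso.union (hLN : MatchIso L N) (hRP : MatchIso R P) {c : ℕ}
    (hL : ∀ x ∈ mSupport L, x < c) (hN : ∀ x ∈ mSupport N, x < c)
    (hR : ∀ x ∈ mSupport R, c ≤ x) (hP : ∀ x ∈ mSupport P, c ≤ x) :
    MatchIso (L ∪ R) (N ∪ P) := by
  obtain ⟨f, hf, rfl⟩ := hLN.exists_strictMonoOn
  obtain ⟨g, hg, rfl⟩ := hRP.exists_strictMonoOn
  simp only [mSupport_image_image, forall_mem_image] at hN hP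
  let φ : ℕ → ℕ := fun x => if x < c then f x else g x
  have hφL : Set.EqOn φ f (mSupport L) := fun x hx => if_pos (hL x hx)
  have hφR : Set.EqOn φ g (mSupport R) := fun x hx => if_neg (hR x hx).not_gt
  have hφ : StrictMonoOn φ (mSupport (L ∪ R) : Set ℕ) := by
    rw [mSupport_union, coe_union]
    rintro x (hx | hx) y (hy | hy) hxy
    · simpa only [hφL hx, hφL hy] using hf hx hy hxy
    · simpa only [hφL hx, hφR hy] using (hN hx).trans_le (hP hy)
    · exact absurd ((hL y hy).trans_le (hR x hx)) hxy.not_gt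
    · simpa only [hφR hx, hφR hy] using hg hx hy hxy
  convert matchIso_image hφ using 1
  rw [image_union]
  congr 1
  · exact image_congr fun e he => image_congr fun x hx => (hφL (subset_mSupport he hx)).symm
  · exact image_congr fun e he => image_congr fun x hx => (hφR (subset_mSupport he hx)).symm

lemma IsMatching.exists_isOrderedMatching (hM : IsMatching r M) :
    ∃ N, IsOrderedMatching r #M N ∧ MatchIso M N := by
  let f : ℕ → ℕ := fun x => Nat.count (· ∈ mSupport M) x + 1
  have hf : StrictMonoOn f (mSupport M : Set ℕ) := fun x hx y _ hxy =>
    Nat.succ_lt_succ (Nat.count_strict_mono hx hxy)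
  have hiso := matchIso_image hf
  refine ⟨_, ⟨hiso.isMatching hM, hiso.card_eq.symm, ?_⟩, hiso⟩
  rw [mSupport_image_image]
  refine eq_of_subset_of_card_le (image_subset_iff.2 fun x hx => ?_) ?_
  · rw [mem_Icc, ← hM.card_mSupport]
    refine ⟨Nat.succ_pos _, ?_⟩
    have h := Nat.count_lt_card (p := (· ∈ mSupport M)) (mSupport M).finite_toSet hx
    exact Nat.succ_le_of_lt (by simpa using h)
  · rw [card_image_of_injOn hf.injOn, hM.card_mSupport, Nat.card_Icc, Nat.add_sub_cancel]

lemma exists_isOrderedMatching (hr : r ≠ 0) (n : ℕ) : ∃ M, IsOrderedMatching r n M := by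
  let block : ℕ → Finset ℕ := fun a => Ioc (r * a) (r * (a + 1))
  have mono : Monotone (r * ·) := fun _ _ h => Nat.mul_le_mul_left r h
  have card_block : ∀ a, #(block a) = r := fun a => by simp [block, mul_add]
  have disj : ∀ a b, a ≠ b → Disjoint (block a) (block b) := fun a b hab => by
    simpa [block, ← disjoint_coe] using mono.pairwise_disjoint_on_Ioc_succ hab
  have inj : Function.Injective block := fun a b hab => by
    by_contra hne
    have := disj a b hne
    rw [← hab, disjoint_self_iff_empty, ← card_eq_zero, card_block] at this
    exact hr this
  refine ⟨(range n).image block, ⟨?_, ?_⟩, ?_, ?_⟩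
  · exact forall_mem_image.2 fun a _ => card_block a
  · exact forall_mem_image.2 fun a _ => forall_mem_image.2 fun b _ hab =>
      disj a b (ne_of_apply_ne block hab)
  · rw [card_image_of_injective _ inj, card_range]
  · rw [← coe_inj, coe_Icc, mSupport, sup_image, sup_eq_biUnion, coe_biUnion]
    have h := mono.biUnion_Ico_Ioc_map_succ 0 n
    simpa [block, Set.ext_iff, Nat.succ_le_iff] using h

end Isomorphism

section Twins

variable {M N L R : Finset (Finset ℕ)} {r n k : ℕ}

lemma hasTwins_zero (M : Finset (Finset ℕ)) : HasTwins M 0 :=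
  ⟨∅, ∅, empty_subset _, empty_subset _, disjoint_bot_left, by
    simpa using matchIso_image (M := ∅) (f := id) strictMonoOn_id, rfl, rfl⟩

lemma HasTwins.le_card (h : HasTwins M k) : k ≤ #M := by
  obtain ⟨M₁, -, hM₁, -, -, -, rfl, -⟩ := h
  exact card_le_card hM₁

lemma HasTwins.le_twinMax (h : HasTwins M k) : k ≤ twinMax M :=
  le_csSup ⟨#M, fun _ => HasTwins.le_card⟩ h

lemma hasTwins_twinMax (M : Finset (Finset ℕ)) : HasTwins M (twinMax M) :=
  Nat.sSup_mem ⟨0, hasTwins_zero M⟩ ⟨#M, fun _ => HasTwins.le_card⟩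

lemma HasTwins.mono (h : HasTwins M k) (hMN : M ⊆ N) : HasTwins N k := by
  obtain ⟨M₁, M₂, h₁, h₂, hM⟩ := h
  exact ⟨M₁, M₂, h₁.trans hMN, h₂.trans hMN, hM⟩

lemma HasTwins.of_matchIso (h : HasTwins M k) (hMN : MatchIso M N) : HasTwins N k := by
  obtain ⟨M₁, M₂, h₁, h₂, hdisj, hiso, hk₁, hk₂⟩ := h
  obtain ⟨f, hf, rfl⟩ := hMN.exists_strictMonoOn
  have iso : ∀ {M'}, M' ⊆ M → MatchIso M' (M'.image (image f)) := fun h' =>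
    matchIso_image (hf.mono (coe_subset.2 (mSupport_mono h')))
  refine ⟨M₁.image (image f), M₂.image (image f), image_subset_image h₁, image_subset_image h₂, ?_,
    (iso h₁).symm.trans (hiso.trans (iso h₂)), (iso h₁).card_eq ▸ hk₁, (iso h₂).card_eq ▸ hk₂⟩
  simp only [mSupport_image_image]
  rw [← disjoint_coe, coe_image, coe_image]
  exact (disjoint_coe.2 hdisj).image hf.injOn (coe_subset.2 (mSupport_mono h₁))
    (coe_subset.2 (mSupport_mono h₂))

lemma minTwins_le_twinMax (hM : IsMatching r M) (hn : n ≤ #M) : minTwins r n ≤ twinMax M := by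
  obtain ⟨S, hS, rfl⟩ := exists_subset_card_eq hn
  obtain ⟨N, hN, hSN⟩ := (hM.subset hS).exists_isOrderedMatching
  calc minTwins r #S ≤ twinMax N := Nat.sInf_le ⟨N, hN, rfl⟩
    _ ≤ twinMax M := (((hasTwins_twinMax N).of_matchIso hSN.symm).mono hS).le_twinMax

lemma exists_twinMax_eq_minTwins (hr : r ≠ 0) (n : ℕ) :
    ∃ M, IsOrderedMatching r n M ∧ twinMax M = minTwins r n := by
  obtain ⟨M, hM⟩ := exists_isOrderedMatching hr n
  exact Nat.sInf_mem (s := {t | ∃ M, IsOrderedMatching r n M ∧ twinMax M = t}) ⟨_, M, hM, rfl⟩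

lemma twinMax_add_twinMax_le (hL : L ⊆ M) (hR : R ⊆ M) (hLR : Disjoint L R) {c : ℕ}
    (hLc : ∀ x ∈ mSupport L, x < c) (hRc : ∀ x ∈ mSupport R, c ≤ x) :
    twinMax L + twinMax R ≤ twinMax M := by
  obtain ⟨L₁, L₂, hL₁, hL₂, hdL, hisoL, hcL₁, hcL₂⟩ := hasTwins_twinMax L
  obtain ⟨R₁, R₂, hR₁, hR₂, hdR, hisoR, hcR₁, hcR₂⟩ := hasTwins_twinMax R
  have below : ∀ {L'}, L' ⊆ L → ∀ x ∈ mSupport L', x < c := fun h x hx => hLc x (mSupport_mono h hx)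
  have above : ∀ {R'}, R' ⊆ R → ∀ x ∈ mSupport R', c ≤ x := fun h x hx => hRc x (mSupport_mono h hx)
  have apart : Disjoint (mSupport L) (mSupport R) :=
    disjoint_left.2 fun x hx hx' => (hLc x hx).not_ge (hRc x hx')
  refine HasTwins.le_twinMax ⟨L₁ ∪ R₁, L₂ ∪ R₂,
    union_subset (hL₁.trans hL) (hR₁.trans hR), union_subset (hL₂.trans hL) (hR₂.trans hR), ?_,
    hisoL.union hisoR (below hL₁) (below hL₂) (above hR₁) (above hR₂), ?_, ?_⟩
  · rw [mSupport_union, mSupport_union, disjoint_union_left, disjoint_union_right,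
      disjoint_union_right]
    exact ⟨⟨hdL, apart.mono (mSupport_mono hL₁) (mSupport_mono hR₂)⟩,
      (apart.mono (mSupport_mono hL₂) (mSupport_mono hR₁)).symm, hdR⟩
  · rw [card_union_of_disjoint (hLR.mono hL₁ hR₁), hcL₁, hcR₁]
  · rw [card_union_of_disjoint (hLR.mono hL₂ hR₂), hcL₂, hcR₂]

end Twins

section Vertices

variable {r : ℕ} {M : Finset (Finset ℕ)} {e f e' f' : Finset ℕ} {i j : Fin r}

/-- The `i`-th smallest vertex of an `r`-element edge `e`, counting from `0`; it takes the junk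
value `0` when `e` does not have exactly `r` elements. -/
noncomputable def vertex (e : Finset ℕ) (i : Fin r) : ℕ :=
  if h : #e = r then e.orderEmbOfFin h i else 0

lemma strictMono_vertex (he : #e = r) : StrictMono (vertex e : Fin r → ℕ) := fun i j hij => by
  simpa only [vertex, dif_pos he] using (e.orderEmbOfFin he).strictMono hij

lemma image_vertex (he : #e = r) : univ.image (vertex e : Fin r → ℕ) = e := by
  convert e.image_orderEmbOfFin_univ he using 2
  exact funext fun i => dif_pos he

lemma vertex_mem (he : #e = r) (i : Fin r) : vertex e i ∈ e := by
  have h := mem_image_of_mem (vertex e) (mem_univ i)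
  rwa [image_vertex he] at h

lemma exists_vertex_eq (he : #e = r) {x : ℕ} (hx : x ∈ e) : ∃ i : Fin r, vertex e i = x := by
  rw [← image_vertex he] at hx
  simpa using hx

lemma IsMatching.eq_of_vertex_eq (hM : IsMatching r M) (he : e ∈ M) (hf : f ∈ M)
    (h : vertex e i = vertex f j) : e = f := by
  by_contra hef
  exact disjoint_left.1 (hM.2 e he f hf hef) (vertex_mem (hM.1 e he) i)
    (h ▸ vertex_mem (hM.1 f hf) j)

lemma IsMatching.vertex_injOn (hM : IsMatching r M) (i : Fin r) :
    Set.InjOn (fun e => vertex e i) (M : Set (Finset ℕ)) :=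
  fun _ he _ hf => hM.eq_of_vertex_eq he hf

/-- The ordered pairs of `r`-element edges `(e, f)` and `(e', f')` are interleaved alike: the
vertices of `e` compare with those of `f` as the vertices of `e'` do with those of `f'`. -/
def SamePattern (r : ℕ) (e f e' f' : Finset ℕ) : Prop :=
  ∀ i j : Fin r, vertex e i < vertex f j ↔ vertex e' i < vertex f' j

lemma samePattern_self (he : #e = r) (hf : #f = r) : SamePattern r e e f f := fun i j => by
  rw [(strictMono_vertex he).lt_iff_lt, (strictMono_vertex hf).lt_iff_lt]

lemma exists_strictMonoOn_range {ι α β : Type*} [Preorder α] [LinearOrder β] [Nonempty β]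
    {φ : ι → α} {ψ : ι → β} (h : ∀ p q, φ p < φ q ↔ ψ p < ψ q) :
    ∃ g : α → β, StrictMonoOn g (Set.range φ) ∧ ∀ p, g (φ p) = ψ p := by
  have factors : ψ.FactorsThrough φ := fun p q hpq => by
    refine le_antisymm (not_lt.1 ?_) (not_lt.1 ?_)
    · exact fun hlt => ((h q p).2 hlt).ne hpq.symm
    · exact fun hlt => ((h p q).2 hlt).ne hpq
  let g := Function.extend φ ψ fun _ => Classical.arbitrary β
  have hg : ∀ p, g (φ p) = ψ p := factors.extend_apply _
  refine ⟨g, ?_, hg⟩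
  rintro _ ⟨p, rfl⟩ _ ⟨q, rfl⟩ hpq
  rw [hg, hg]
  exact (h p q).1 hpq

lemma card_le_twinMax_of_samePattern {ι : Type*} [Fintype ι] (hM : IsMatching r M)
    {e f : ι → Finset ℕ} (he : ∀ a, e a ∈ M) (hf : ∀ a, f a ∈ M) (hinj : Function.Injective e)
    (hne : ∀ a b, e a ≠ f b) (h : Pairwise fun a b => SamePattern r (e a) (e b) (f a) (f b)) :
    Fintype.card ι ≤ twinMax M := by
  have same : ∀ a b, SamePattern r (e a) (e b) (f a) (f b) := fun a b => by
    rcases eq_or_ne a b with rfl | hab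
    · exact samePattern_self (hM.1 _ (he a)) (hM.1 _ (hf a))
    · exact h hab
  obtain ⟨g, hg, hgv⟩ := exists_strictMonoOn_range (φ := fun p : ι × Fin r => vertex (e p.1) p.2)
    (ψ := fun p => vertex (f p.1) p.2) fun p q => same p.1 q.1 p.2 q.2
  have image_edge : ∀ a, (e a).image g = f a := fun a => by
    rw [← image_vertex (hM.1 _ (he a)), image_image, ← image_vertex (hM.1 _ (hf a))]
    exact image_congr fun i _ => hgv (a, i)
  have support : (mSupport (univ.image e) : Set ℕ) ⊆
      Set.range fun p : ι × Fin r => vertex (e p.1) p.2 := fun x hx => by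
    obtain ⟨_, ha, hx⟩ := mem_mSupport.1 hx
    obtain ⟨a, -, rfl⟩ := mem_image.1 ha
    obtain ⟨i, hi⟩ := exists_vertex_eq (hM.1 _ (he a)) hx
    exact ⟨(a, i), hi⟩
  have iso : MatchIso (univ.image e) (univ.image f) := by
    convert matchIso_image (hg.mono support) using 1
    rw [image_image]
    exact image_congr fun a _ => (image_edge a).symm
  have card : #(univ.image e) = Fintype.card ι := card_image_of_injective _ hinj
  have he' : univ.image e ⊆ M := image_subset_iff.2 fun a _ => he a
  have hf' : univ.image f ⊆ M := image_subset_iff.2 fun a _ => hf a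
  refine HasTwins.le_twinMax ⟨_, _, he', hf', hM.disjoint_mSupport he' hf' ?_, iso, card,
    iso.card_eq ▸ card⟩
  simpa [disjoint_left, eq_comm] using hne

end Vertices

section Permutations

variable {M S : Finset (Finset ℕ)} {r n k : ℕ}

lemma PermTwins.two_mul_le {π : Equiv.Perm (Fin n)} (h : PermTwins π k) : 2 * k ≤ n := by
  obtain ⟨a, b, ha, hb, hab, -⟩ := h
  have hinj : Function.Injective (Sum.elim a b) := ha.injective.sumElim hb.injective hab
  simpa [two_mul] using Fintype.card_le_of_injective _ hinj

lemma permTwins_zero (π : Equiv.Perm (Fin n)) : PermTwins π 0 :=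
  ⟨Fin.elim0, Fin.elim0, fun i => i.elim0, fun i => i.elim0, fun i => i.elim0, fun i => i.elim0⟩

lemma permTwins_permTau (π : Equiv.Perm (Fin n)) : PermTwins π (permTau n) := by
  let s : Set ℕ := {k | ∀ π : Equiv.Perm (Fin n), PermTwins π k}
  have bdd : BddAbove s := by
    refine ⟨n, fun k hk => ?_⟩
    have := (hk π).two_mul_le
    omega
  exact Nat.sSup_mem (s := s) ⟨0, permTwins_zero⟩ bdd π

lemma two_mul_permTau_le (n : ℕ) : 2 * permTau n ≤ n := (permTwins_permTau 1).two_mul_le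

lemma exists_equiv_fin_lt_iff {γ α : Type*} [LinearOrder α] {S : Finset γ} {φ : γ → α}
    (hφ : Set.InjOn φ S) : ∃ E : S ≃ Fin #S, ∀ e f, E e < E f ↔ φ e < φ f := by
  let _ : LinearOrder S := LinearOrder.lift' (fun e : S => φ e) hφ.injective
  let E : Fin #S ≃o S := Fintype.orderIsoFinOfCardEq S (Fintype.card_coe S)
  exact ⟨E.symm.toEquiv, fun e f => E.symm.lt_iff_lt⟩

lemma permTau_le_twinMax (hM : IsMatching r M) (hS : S ⊆ M) {α β : Finset ℕ → ℕ}
    (hα : Set.InjOn α S) (hβ : Set.InjOn β S)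
    (h : ∀ e ∈ S, ∀ f ∈ S, ∀ e' ∈ S, ∀ f' ∈ S, e ≠ f → e' ≠ f' → (α e < α f ↔ α e' < α f') →
      (β e < β f ↔ β e' < β f') → SamePattern r e f e' f') :
    permTau #S ≤ twinMax M := by
  obtain ⟨E, hE⟩ := exists_equiv_fin_lt_iff hα
  obtain ⟨F, hF⟩ := exists_equiv_fin_lt_iff hβ
  obtain ⟨a, b, ha, hb, hab, hπ⟩ := permTwins_permTau (E.symm.trans F)
  have inj : Function.Injective fun e : S => (e : Finset ℕ) := Subtype.val_injective
  have inj' := inj.comp E.symm.injective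
  have card := card_le_twinMax_of_samePattern hM (e := fun t => E.symm (a t))
    (f := fun t => E.symm (b t)) (fun t => hS (E.symm (a t)).2) (fun t => hS (E.symm (b t)).2)
    (inj'.comp ha.injective) (fun s t => inj'.ne (hab s t)) fun s t hst => by
      refine h _ (coe_mem _) _ (coe_mem _) _ (coe_mem _) _ (coe_mem _)
        (inj'.ne (ha.injective.ne hst)) (inj'.ne (hb.injective.ne hst)) ?_ ?_
      · simp only [← hE, Equiv.apply_symm_apply, ha.lt_iff_lt, hb.lt_iff_lt]
      · simpa only [← hF, Equiv.trans_apply] using hπ s t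
  rwa [Fintype.card_fin] at card

end Permutations

section Cliques

variable {r k : ℕ} {M S C : Finset (Finset ℕ)} {i j : Fin r}

/-- Mirsky's theorem, by removing the antichain of minimal elements of `s`; the chain records its
least element so that it can be extended downwards. -/
lemma exists_isChain_or_isAntichain {β : Type*} (R : β → β → Prop) [IsStrictOrder β R] {m : ℕ} :
    ∀ {j : ℕ} {s : Finset β}, j * m < #s →
      (∃ t ⊆ s, #t = j + 1 ∧ IsChain R (t : Set β) ∧ ∃ x ∈ t, ∀ y ∈ t, y ≠ x → R x y) ∨
      ∃ t ⊆ s, #t = m + 1 ∧ IsAntichain R (t : Set β)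
  | 0, s, h => by
    obtain ⟨x, hx⟩ := card_pos.1 (h.trans_le' (Nat.zero_le _))
    exact .inl ⟨{x}, singleton_subset_iff.2 hx, card_singleton x, by simp, x, by simp⟩
  | j + 1, s, h => by
    classical
    let A := {x ∈ s | ∀ y ∈ s, ¬R y x}
    have hAs : A ⊆ s := filter_subset _ _
    have hA : IsAntichain R (A : Set β) := fun x hx y hy _ =>
      (mem_filter.1 hy).2 x (mem_filter.1 hx).1
    by_cases hAm : m < #A
    · obtain ⟨t, ht, htm⟩ := exists_subset_card_eq (Nat.succ_le_of_lt hAm)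
      exact .inr ⟨t, ht.trans hAs, htm, hA.subset (coe_subset.2 ht)⟩
    have hcard : j * m < #(s \ A) := by
      have := card_sdiff_add_card_eq_card hAs
      rw [add_mul] at h
      omega
    rcases exists_isChain_or_isAntichain R hcard with
      ⟨t, ht, htj, hchain, x, hxt, hx⟩ | ⟨t, ht, htm, hanti⟩
    · obtain ⟨y, hys, hyx⟩ : ∃ y ∈ s, R y x := by
        have := ht hxt
        simp only [A, mem_sdiff, mem_filter] at this
        grind
      have hy : ∀ z ∈ t, R y z := fun z hz => by
        rcases eq_or_ne z x with rfl | hzx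
        exacts [hyx, _root_.trans hyx (hx z hz hzx)]
      have hyt : y ∉ t := fun h => irrefl y (hy y h)
      refine .inl ⟨insert y t, insert_subset hys (ht.trans sdiff_subset), ?_, ?_, y,
        mem_insert_self _ _, fun z hz hzy => hy z (mem_of_mem_insert_of_ne hz hzy)⟩
      · rw [card_insert_of_notMem hyt, htj]
      · rw [coe_insert]
        exact hchain.insert fun z hz _ => .inl (hy z hz)
    · exact .inr ⟨t, ht.trans sdiff_subset, htm, hanti⟩

/-- The edges of `C`, restricted to their vertices with index in `I`, form a clique: the pattern
made by two of them depends only on which of the two has the smaller vertex of index `i₀`. -/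
def IsCliqueOn {r : ℕ} (I : Set (Fin r)) (i₀ : Fin r) (C : Finset (Finset ℕ)) : Prop :=
  ∀ e ∈ C, ∀ f ∈ C, ∀ e' ∈ C, ∀ f' ∈ C, e ≠ f → e' ≠ f' →
    (vertex e i₀ < vertex f i₀ ↔ vertex e' i₀ < vertex f' i₀) →
    ∀ i ∈ I, ∀ j ∈ I, vertex e i < vertex f j ↔ vertex e' i < vertex f' j

lemma isCliqueOn_singleton (i : Fin r) (C : Finset (Finset ℕ)) : IsCliqueOn {i} i C := by
  rintro e - f - e' - f' - - - h _ rfl _ rfl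
  exact h

lemma isCliqueOn_pair (hC : IsMatching r C) (hij : i < j) {A B : Prop}
    (h : ∀ e ∈ C, ∀ f ∈ C, vertex e i < vertex f i →
      (vertex e j < vertex f i ↔ A) ∧ (vertex e j < vertex f j ↔ B)) :
    IsCliqueOn {i, j} i C := by
  have key : ∀ e ∈ C, ∀ f ∈ C, e ≠ f →
      (vertex e i < vertex f j ↔ (A → vertex e i < vertex f i)) ∧
      (vertex e j < vertex f i ↔ (vertex e i < vertex f i ∧ A)) ∧
      (vertex e j < vertex f j ↔ (vertex e i < vertex f i ↔ B)) := fun e he f hf hef => by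
    have distinct : ∀ a b : Fin r, vertex e a ≠ vertex f b := fun _ _ h =>
      hef (hC.eq_of_vertex_eq he hf h)
    have heij := strictMono_vertex (hC.1 e he) hij
    have hfij := strictMono_vertex (hC.1 f hf) hij
    have := distinct i i
    have := distinct i j
    have := distinct j j
    rcases lt_or_gt_of_ne (distinct i i) with hlt | hlt
    · have := h e he f hf hlt
      grind
    · have := h f hf e he hlt
      grind
  rintro e he f hf e' he' f' hf' hef hef' hiff a (rfl | rfl) b (rfl | rfl)
  · exact hiff
  · rw [(key e he f hf hef).1, (key e' he' f' hf' hef').1, hiff]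
  · rw [(key e he f hf hef).2.1, (key e' he' f' hf' hef').2.1, hiff]
  · rw [(key e he f hf hef).2.2, (key e' he' f' hf' hef').2.2, hiff]

lemma exists_isCliqueOn_pair (hS : IsMatching r S) (hij : i < j) (hk : k ^ 3 ≤ #S) :
    ∃ C ⊆ S, #C = k ∧ IsCliqueOn {i, j} i C := by
  obtain _ | m := k
  · exact ⟨∅, empty_subset _, rfl, by simp [IsCliqueOn]⟩
  let before : Finset ℕ → Finset ℕ → Prop := fun e f =>
    vertex e j < vertex f i ∧ vertex f i < vertex f j
  have : IsStrictOrder _ before :=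
    { irrefl := fun e h => h.1.asymm h.2
      trans := fun e f g hef hfg => ⟨hef.1.trans (hef.2.trans hfg.1), hfg.2⟩ }
  let under : Finset ℕ → Finset ℕ → Prop := fun e f =>
    vertex e i < vertex f i ∧ vertex e j < vertex f j
  have : IsStrictOrder _ under :=
    { irrefl := fun e h => h.1.false
      trans := fun e f g hef hfg => ⟨hef.1.trans hfg.1, hef.2.trans hfg.2⟩ }
  have vertex_lt : ∀ e ∈ S, vertex e i < vertex e j := fun e he => strictMono_vertex (hS.1 e he) hij
  rcases exists_isChain_or_isAntichain before (j := m) (m := m ^ 2 + 2 * m) (s := S) (by nlinarith)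
    with ⟨C, hCS, hC, chain, -⟩ | ⟨T, hTS, hT, anti⟩
  · refine ⟨C, hCS, hC, isCliqueOn_pair (hS.subset hCS) hij (A := True) (B := True) ?_⟩
    intro e he f hf hlt
    have := chain he hf
    have := vertex_lt e (hCS he)
    have := vertex_lt f (hCS hf)
    grind
  have not_before : ∀ e ∈ T, ∀ f ∈ T, vertex e i < vertex f i → ¬vertex e j < vertex f i :=
    fun e he f hf hlt h => anti he hf (by grind) ⟨h, vertex_lt f (hTS hf)⟩
  rcases exists_isChain_or_isAntichain under (j := m) (m := m) (s := T) (by rw [hT]; nlinarith)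
    with ⟨C, hCT, hC, chain, -⟩ | ⟨C, hCT, hC, anti⟩
  · refine ⟨C, hCT.trans hTS, hC, isCliqueOn_pair (hS.subset (hCT.trans hTS)) hij (A := False)
      (B := True) fun e he f hf hlt => ?_⟩
    have := chain he hf
    have := not_before e (hCT he) f (hCT hf) hlt
    grind
  · refine ⟨C, hCT.trans hTS, hC, isCliqueOn_pair (hS.subset (hCT.trans hTS)) hij (A := False)
      (B := False) fun e he f hf hlt => ?_⟩
    have : ¬vertex e j < vertex f j := fun h => anti he hf (by grind) ⟨hlt, h⟩
    have := not_before e (hCT he) f (hCT hf) hlt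
    grind

end Cliques

section Cut

variable {r n k c q : ℕ} {M S C : Finset (Finset ℕ)}

lemma card_filter_not_disjoint_le {α : Type*} [DecidableEq α] {s : Finset (Finset α)}
    (hs : (s : Set (Finset α)).PairwiseDisjoint id) (V : Finset α) :
    #{e ∈ s | ¬Disjoint e V} ≤ #V := by
  refine (card_le_card_biUnion (f := (· ∩ V)) (fun e he f hf hef => ?_) fun e he => ?_).trans
    (card_le_card (biUnion_subset.2 fun e _ => inter_subset_right))
  · exact (hs (mem_filter.1 he).1 (mem_filter.1 hf).1 hef).mono inter_subset_left inter_subset_left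
  · exact not_disjoint_iff_nonempty_inter.1 (mem_filter.1 he).2

lemma IsMatching.exists_card_filter_lt_eq (hM : IsMatching r M) (hr : r ≠ 0) {s : ℕ}
    (hs : s ≤ #M) : ∃ c, #{e ∈ M | ∀ x ∈ e, x < c} = s := by
  let below : ℕ → Finset (Finset ℕ) := fun c => {e ∈ M | ∀ x ∈ e, x < c}
  have below_zero : below 0 = ∅ := by
    refine filter_false_of_mem fun e he h => ?_
    obtain ⟨x, hx⟩ := hM.nonempty hr he
    exact Nat.not_lt_zero x (h x hx)
  have below_succ : ∀ c, #(below (c + 1)) ≤ #(below c) + 1 := fun c => by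
    have hsub : below (c + 1) ⊆ below c ∪ {e ∈ M | ¬Disjoint e {c}} := fun e he => by
      simp only [below, mem_union, mem_filter, disjoint_singleton_right, not_not] at he ⊢
      grind
    calc #(below (c + 1)) ≤ #(below c) + #{e ∈ M | ¬Disjoint e {c}} :=
          (card_le_card hsub).trans (card_union_le _ _)
      _ ≤ #(below c) + 1 := by gcongr; exact card_filter_not_disjoint_le hM.pairwiseDisjoint {c}
  have exists_ge : ∃ c, s ≤ #(below c) := by
    obtain ⟨c, hc⟩ := (mSupport M).bddAbove
    refine ⟨c + 1, hs.trans_eq (congrArg card (filter_true_of_mem fun e he x hx => ?_).symm)⟩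
    exact Nat.lt_succ_of_le (hc (subset_mSupport he hx))
  obtain ⟨c, hc, hmin⟩ : ∃ c, s ≤ #(below c) ∧ ∀ c' < c, ¬s ≤ #(below c') :=
    ⟨Nat.find exists_ge, Nat.find_spec exists_ge, fun _ => Nat.find_min exists_ge⟩
  refine ⟨c, le_antisymm ?_ hc⟩
  change #(below c) ≤ s
  obtain _ | c := c
  · simp [below_zero]
  · have := below_succ c
    have := hmin c (Nat.lt_succ_self c)
    omega

/-- The point `c` splits every edge of `S` in the same way: exactly the first `q` vertices of each
edge lie to the left of `c`. -/
def SplitsAt (r c q : ℕ) (S : Finset (Finset ℕ)) : Prop :=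
  ∀ e ∈ S, ∀ i : Fin r, vertex e i < c ↔ (i : ℕ) < q

lemma SplitsAt.subset (hS : SplitsAt r c q S) (hC : C ⊆ S) : SplitsAt r c q C :=
  fun e he => hS e (hC he)

lemma exists_vertex_lt_iff {e : Finset ℕ} (he : #e = r) (c : ℕ) :
    ∃ q, ∀ i : Fin r, vertex e i < c ↔ (i : ℕ) < q := by
  classical
  have h : ∃ q, ∀ hq : q < r, c ≤ vertex e ⟨q, hq⟩ := ⟨r, fun hr => (hr.false).elim⟩
  refine ⟨Nat.find h, fun i => ⟨fun hi => ?_, fun hi => ?_⟩⟩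
  · by_contra! hle
    have := Nat.find_spec h (hle.trans_lt i.2)
    exact hi.not_ge (this.trans ((strictMono_vertex he).monotone hle))
  · have := Nat.find_min h hi
    push Not at this
    exact this.2

lemma exists_splitsAt_of_crossing (hS : ∀ e ∈ S, #e = r) (hr : 2 ≤ r)
    (hlt : ∀ e ∈ S, ∃ x ∈ e, x < c) (hge : ∀ e ∈ S, ∃ x ∈ e, c ≤ x) :
    ∃ q, 0 < q ∧ q < r ∧ ∃ T ⊆ S, #S ≤ (r - 1) * #T ∧ SplitsAt r c q T := by
  have h : ∀ e ∈ S, ∃ q, ∀ i : Fin r, vertex e i < c ↔ (i : ℕ) < q := fun e he =>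
    exists_vertex_lt_iff (hS e he) c
  choose! q hq using h
  have maps : ∀ e ∈ S, q e ∈ Ioo 0 r := fun e he => by
    obtain ⟨x, hx, hxc⟩ := hlt e he
    obtain ⟨y, hy, hyc⟩ := hge e he
    obtain ⟨i, rfl⟩ := exists_vertex_eq (hS e he) hx
    obtain ⟨j, rfl⟩ := exists_vertex_eq (hS e he) hy
    have := hq e he i
    have := hq e he j
    have := j.2
    rw [mem_Ioo]
    omega
  obtain ⟨m, hm, hmax⟩ := exists_max_image (Ioo 0 r) (fun m => #{e ∈ S | q e = m})
    ⟨1, mem_Ioo.2 (by omega)⟩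
  refine ⟨m, (mem_Ioo.1 hm).1, (mem_Ioo.1 hm).2, {e ∈ S | q e = m}, filter_subset _ _, ?_, ?_⟩
  · have := card_le_mul_card_image_of_maps_to maps _ hmax
    rwa [Nat.card_Ioo, Nat.sub_zero, mul_comm] at this
  · intro e he
    rw [← (mem_filter.1 he).2]
    exact hq e (mem_filter.1 he).1

lemma IsMatching.two_mul_minTwins_le_or_exists_splitsAt (hM : IsMatching r M) (hr : 2 ≤ r) :
    2 * minTwins r (#M / 3) ≤ twinMax M ∨
      ∃ c q, 0 < q ∧ q < r ∧ ∃ S ⊆ M, #M ≤ 3 * (r - 1) * #S ∧ SplitsAt r c q S := by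
  obtain ⟨c, hc⟩ := hM.exists_card_filter_lt_eq (by omega) (Nat.div_le_self #M 3)
  set L := {e ∈ M | ∀ x ∈ e, x < c}
  let R := {e ∈ M | ∀ x ∈ e, c ≤ x}
  let X := {e ∈ M | ¬(∀ x ∈ e, x < c) ∧ ¬∀ x ∈ e, c ≤ x}
  have hL : L ⊆ M := filter_subset _ _
  have hR : R ⊆ M := filter_subset _ _
  have hX : X ⊆ M := filter_subset _ _
  by_cases hRcard : #M / 3 ≤ #R
  · left
    have hLc : ∀ x ∈ mSupport L, x < c := fun x hx => by
      obtain ⟨e, he, hxe⟩ := mem_mSupport.1 hx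
      exact (mem_filter.1 he).2 x hxe
    have hRc : ∀ x ∈ mSupport R, c ≤ x := fun x hx => by
      obtain ⟨e, he, hxe⟩ := mem_mSupport.1 hx
      exact (mem_filter.1 he).2 x hxe
    have hLR : Disjoint L R := disjoint_left.2 fun e heL heR => by
      obtain ⟨x, hx⟩ := hM.nonempty (by omega) (hL heL)
      exact ((mem_filter.1 heL).2 x hx).not_ge ((mem_filter.1 heR).2 x hx)
    calc 2 * minTwins r (#M / 3) ≤ twinMax L + twinMax R := by
          rw [two_mul]
          exact add_le_add (minTwins_le_twinMax (hM.subset hL) hc.ge)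
            (minTwins_le_twinMax (hM.subset hR) hRcard)
      _ ≤ twinMax M := twinMax_add_twinMax_le hL hR hLR hLc hRc
  · right
    obtain ⟨q, hq, hqr, S, hSX, hcard, hS⟩ := exists_splitsAt_of_crossing (S := X) (c := c)
      (fun e he => hM.1 e (hX he)) hr
      (fun e he => by simpa using (mem_filter.1 he).2.2)
      (fun e he => by simpa using (mem_filter.1 he).2.1)
    refine ⟨c, q, hq, hqr, S, hSX.trans hX, ?_, hS⟩
    have hsub : M ⊆ (L ∪ R) ∪ X := fun e he => by grind
    have := (card_le_card hsub).trans (card_union_le _ _)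
    have := card_union_le L R
    rw [mul_assoc]
    omega

lemma permTau_le_twinMax_of_splitsAt (hM : IsMatching r M) (hSM : S ⊆ M) (hS : SplitsAt r c q S)
    {p j₀ : Fin r} (hp : ∀ j ≠ p, (j : ℕ) < q ↔ ¬(p : ℕ) < q) (hclique : IsCliqueOn {p}ᶜ j₀ S) :
    permTau #S ≤ twinMax M := by
  have inj : ∀ i : Fin r, Set.InjOn (fun e => vertex e i) S := fun i =>
    (hM.vertex_injOn i).mono (coe_subset.2 hSM)
  refine permTau_le_twinMax hM hSM (inj p) (inj j₀)
    fun e he f hf e' he' f' hf' hef hef' hα hβ i j => ?_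
  have hi := hS e he i
  have hj := hS f hf j
  have hi' := hS e' he' i
  have hj' := hS f' hf' j
  -- A vertex of index `p` and a vertex of any other index lie on different sides of `c`.
  by_cases hip : i = p <;> by_cases hjp : j = p
  · subst hip hjp
    exact hα
  · have := hp j hjp
    grind
  · have := hp i hip
    grind
  · exact hclique e he f hf e' he' f' hf' hef hef' hβ i hip j hjp

lemma exists_isCliqueOn_compl (hr : r = 2 ∨ r = 3) (hS : IsMatching r S) (hq : 0 < q) (hqr : q < r)
    (hk : k ^ (2 ^ (r - 1) - 1) ≤ #S) :
    ∃ p j₀ : Fin r, (∀ j ≠ p, (j : ℕ) < q ↔ ¬(p : ℕ) < q) ∧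
      ∃ C ⊆ S, #C = k ∧ IsCliqueOn {p}ᶜ j₀ C := by
  rcases hr with rfl | rfl
  · obtain rfl : q = 1 := by omega
    obtain ⟨C, hC, hCk⟩ := exists_subset_card_eq (show k ≤ #S by simpa using hk)
    have compl : ({0}ᶜ : Set (Fin 2)) = {1} := by ext i; fin_cases i <;> simp
    exact ⟨0, 1, by decide, C, hC, hCk, compl ▸ isCliqueOn_singleton 1 C⟩
  obtain rfl | rfl : q = 1 ∨ q = 2 := by omega
  · have compl : ({0}ᶜ : Set (Fin 3)) = {1, 2} := by ext i; fin_cases i <;> simp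
    exact ⟨0, 1, by decide, compl ▸ exists_isCliqueOn_pair hS (by decide) hk⟩
  · have compl : ({2}ᶜ : Set (Fin 3)) = {0, 1} := by ext i; fin_cases i <;> simp
    exact ⟨2, 0, by decide, compl ▸ exists_isCliqueOn_pair hS (by decide) hk⟩

end Cut

section Cells

variable {r n j q w N : ℕ} {M : Finset (Finset ℕ)} {e f : Finset ℕ}

lemma exists_pairwise_not_rel {β : Type*} {R : β → β → Prop} [DecidableRel R]
    (hsymm : ∀ a b, R a b → R b a) {s : Finset β} {d : ℕ} (hrefl : ∀ a ∈ s, R a a)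
    (hd : ∀ a ∈ s, #{b ∈ s | R a b} ≤ d) :
    ∃ t ⊆ s, (t : Set β).Pairwise (fun a b => ¬R a b) ∧ #s ≤ #t * d := by
  classical
  let F : Finset (Finset β) := s.powerset.filter fun t => (t : Set β).Pairwise fun a b => ¬R a b
  obtain ⟨t, ht, hmax⟩ := exists_max_image F card ⟨∅, by simp [F]⟩
  obtain ⟨hts, hpair⟩ := mem_filter.1 ht
  rw [mem_powerset] at hts
  have covers : s ⊆ t.biUnion fun a => {b ∈ s | R a b} := fun b hb => by
    by_contra hfree
    have free : ∀ a ∈ t, ¬R a b := by simpa [hb] using hfree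
    have hbt : b ∉ t := fun hbt => free b hbt (hrefl b hb)
    have hins : insert b t ∈ F := by
      rw [mem_filter, mem_powerset, coe_insert]
      refine ⟨insert_subset hb hts, hpair.insert fun a ha _ => ⟨fun h => ?_, free a ha⟩⟩
      exact free a ha (hsymm b a h)
    have := hmax _ hins
    rw [card_insert_of_notMem hbt] at this
    omega
  exact ⟨t, hts, hpair, (card_le_card covers).trans
    (card_biUnion_le_card_mul _ _ _ fun a ha => hd a (hts ha))⟩

/-- The indices of the cells met by `e` when `ℕ` is cut into the cells `[0, w), [w, 2w), …`. -/
def cells (w : ℕ) (e : Finset ℕ) : Finset ℕ := e.image (· / w)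

lemma div_mem_cells {x : ℕ} (hx : x ∈ e) : x / w ∈ cells w e := mem_image_of_mem _ hx

lemma IsMatching.card_filter_not_disjoint_cells_le (hM : IsMatching r M) (hw : 0 < w)
    (he : #e = r) : #{f ∈ M | ¬Disjoint (cells w e) (cells w f)} ≤ r * w := by
  let V := (cells w e).biUnion fun a => Ico (a * w) (a * w + w)
  have hsub : {f ∈ M | ¬Disjoint (cells w e) (cells w f)} ⊆ {f ∈ M | ¬Disjoint f V} :=
    monotone_filter_right _ fun f _ hf => by
      obtain ⟨a, ha, hfa⟩ := not_disjoint_iff.1 hf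
      obtain ⟨x, hx, rfl⟩ := mem_image.1 hfa
      refine not_disjoint_iff.2 ⟨x, hx, mem_biUnion.2 ⟨_, ha, mem_Ico.2 ⟨?_, ?_⟩⟩⟩
      · exact Nat.div_mul_le_self x w
      · exact Nat.lt_div_mul_add hw
  calc #{f ∈ M | ¬Disjoint (cells w e) (cells w f)} ≤ #{f ∈ M | ¬Disjoint f V} := card_le_card hsub
    _ ≤ #V := card_filter_not_disjoint_le hM.pairwiseDisjoint V
    _ ≤ #(cells w e) * w := card_biUnion_le_card_mul _ _ _ fun a _ => by simp
    _ ≤ r * w := by gcongr; exact he ▸ card_image_le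

lemma IsMatching.card_filter_no_partner_le (hM : IsMatching r M)
    (hN : ∀ x ∈ mSupport M, x < w * N) :
    #{e ∈ M | ∀ f ∈ M, (∀ i : Fin r, vertex e i / w = vertex f i / w) → e = f} ≤ N ^ r := by
  have hcard : #(Fintype.piFinset fun _ : Fin r => range N) = N ^ r := by simp
  rw [← hcard]
  refine card_le_card_of_injOn (fun e i => vertex e i / w) (fun e he => ?_) fun e he f hf hef => ?_
  · have he := (mem_filter.1 he).1
    simp only [mem_coe, Fintype.mem_piFinset, mem_range]
    exact fun i => Nat.div_lt_of_lt_mul (hN _ (subset_mSupport he (vertex_mem (hM.1 e he) i)))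
  · exact (mem_filter.1 he).2 f (mem_filter.1 hf).1 (congrFun hef)

lemma lt_iff_div_lt_div_of_ne {x y : ℕ} (h : x / w ≠ y / w) : x < y ↔ x / w < y / w :=
  ⟨fun hxy => (Nat.div_le_div_right hxy.le).lt_of_ne h, Nat.lt_of_div_lt_div⟩

lemma samePattern_of_div_eq {e' f' : Finset ℕ} (he : #e = r) (hf : #f = r)
    (hdisj : Disjoint (cells w e) (cells w f))
    (hee' : ∀ i : Fin r, vertex e i / w = vertex e' i / w)
    (hff' : ∀ i : Fin r, vertex f i / w = vertex f' i / w) : SamePattern r e f e' f' := by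
  intro i j
  have hne : vertex e i / w ≠ vertex f j / w := fun h => disjoint_left.1 hdisj
    (div_mem_cells (vertex_mem he i)) (h ▸ div_mem_cells (vertex_mem hf j))
  rw [lt_iff_div_lt_div_of_ne hne, hee', hff', ← lt_iff_div_lt_div_of_ne]
  rwa [← hee', ← hff']

lemma IsMatching.lt_twinMax_of_cells (hM : IsMatching r M) (hr : r ≠ 0) (hw : 0 < w)
    (hN : ∀ x ∈ mSupport M, x < w * N) (hcard : N ^ r + j * (r * w) < #M) : j < twinMax M := by
  classical
  let lonely := {e ∈ M | ∀ f ∈ M, (∀ i : Fin r, vertex e i / w = vertex f i / w) → e = f}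
  have hlonely : #lonely ≤ N ^ r := hM.card_filter_no_partner_le hN
  have hP : M \ lonely ⊆ M := sdiff_subset
  have hPcard : j * (r * w) < #(M \ lonely) := by
    have := le_card_sdiff lonely M
    omega
  have cells_nonempty : ∀ e ∈ M, (cells w e).Nonempty := fun e he => (hM.nonempty hr he).image _
  obtain ⟨T, hT, hpair, hTcard⟩ := exists_pairwise_not_rel
    (R := fun e f => ¬Disjoint (cells w e) (cells w f)) (s := M \ lonely) (d := r * w)
    (fun e f h h' => h h'.symm)
    (fun e he h => (cells_nonempty e (hP he)).ne_empty (by simpa using h))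
    fun e he => (hM.subset hP).card_filter_not_disjoint_cells_le hw (hM.1 e (hP he))
  have hTM := hT.trans hP
  have hdisj : ∀ {e f}, e ∈ T → f ∈ T → e ≠ f → Disjoint (cells w e) (cells w f) :=
    fun he hf hef => not_not.1 (hpair he hf hef)
  have partner : ∀ e ∈ T, ∃ f ∈ M, (∀ i : Fin r, vertex e i / w = vertex f i / w) ∧ e ≠ f := by
    intro e he
    have := hT he
    simp only [lonely, mem_sdiff, mem_filter, not_and, not_forall] at this
    grind
  choose! g hgM hg hne using partner
  have hgT : ∀ e ∈ T, ∀ f ∈ T, e ≠ g f := by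
    rintro e he f hf rfl
    refine disjoint_left.1 (hdisj he hf (hne f hf).symm)
      (div_mem_cells (vertex_mem (hM.1 _ (hTM he)) ⟨0, Nat.pos_of_ne_zero hr⟩)) ?_
    rw [← hg f hf]
    exact div_mem_cells (vertex_mem (hM.1 f (hTM hf)) _)
  have hle := card_le_twinMax_of_samePattern hM (e := fun e : T => e) (f := fun e : T => g e)
    (fun e => hTM e.2) (fun e => hgM e e.2) Subtype.val_injective
    (fun e f => hgT e e.2 f f.2) fun e f hef =>
      samePattern_of_div_eq (hM.1 e (hTM e.2)) (hM.1 f (hTM f.2))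
        (hdisj e.2 f.2 (Subtype.coe_injective.ne hef)) (hg e e.2) (hg f f.2)
  rw [Fintype.card_coe] at hle
  exact (Nat.lt_of_mul_lt_mul_right (hPcard.trans_le hTcard)).trans_le hle

lemma IsMatching.one_le_twinMax (hM : IsMatching r M) (hr : r ≠ 0) (hcard : 2 ≤ #M) :
    1 ≤ twinMax M := by
  obtain ⟨c, hc⟩ := (mSupport M).bddAbove
  exact hM.lt_twinMax_of_cells hr (w := c + 1) (N := 1) (j := 0) c.succ_pos
    (fun x hx => by simpa using Nat.lt_succ_of_le (hc hx)) (by rw [one_pow]; omega)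

lemma IsOrderedMatching.le_twinMax (hM : IsOrderedMatching r n M) (hr : r ≠ 0)
    (hn : 3 * (2 * r ^ 2 * q) ^ r ≤ n) : q ≤ twinMax M := by
  obtain ⟨hM, hcard, hsupp⟩ := hM
  obtain _ | j := q
  · exact Nat.zero_le _
  set N := 2 * r ^ 2 * (j + 1) with hN
  set d := r * n / N
  have hd : N * d ≤ r * n := Nat.mul_div_le _ _
  refine hM.lt_twinMax_of_cells hr (w := d + 1) (N := N) d.succ_pos (fun x hx => ?_) ?_
  · rw [hsupp, mem_Icc] at hx
    rw [mul_comm]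
    exact hx.2.trans_lt (Nat.lt_mul_div_succ _ (by positivity))
  · have hr0 : 0 < r := Nat.pos_of_ne_zero hr
    have hjd : 2 * r * (j + 1) * d ≤ n := Nat.le_of_mul_le_mul_left (c := r) (by
      calc r * (2 * r * (j + 1) * d) = N * d := by rw [hN]; ring
        _ ≤ r * n := hd) hr0
    have hNr : 2 * r * (j + 1) ≤ N ^ r := by
      refine le_trans ?_ (Nat.le_self_pow hr N)
      rw [hN]
      gcongr
      exact Nat.le_self_pow two_ne_zero r
    rw [hcard]
    nlinarith

end Cells

section Recurrence

variable {r n k q s : ℕ} {M : Finset (Finset ℕ)}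

lemma sq_le_two_pow (hr : 4 ≤ r) : r ^ 2 ≤ 2 ^ r := by
  induction r, hr using Nat.le_induction with
  | base => norm_num
  | succ r hr ih => rw [pow_succ 2]; nlinarith

lemma three_mul_pow_le (hr : 4 ≤ r) (hq : 2 ≤ q) :
    3 * (2 * r ^ 2 * q) ^ r ≤ 6 * r * (4 * q) ^ (2 ^ (r - 1) - 1) := by
  have hsq := sq_le_two_pow hr
  have htwo : 2 ^ r = 2 * 2 ^ (r - 1) := (mul_pow_sub_one (by omega) 2).symm
  obtain ⟨D, hD⟩ : ∃ D, 2 ^ (r - 1) = D + 1 := Nat.exists_eq_add_one.2 (by positivity)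
  have hrD : r * (r + 2) ≤ 3 * (D + 1) := by nlinarith
  obtain ⟨m, rfl⟩ : ∃ m, D = r + m := Nat.exists_eq_add_of_le (by nlinarith)
  rw [hD, Nat.add_sub_cancel]
  calc 3 * (2 * r ^ 2 * q) ^ r ≤ 3 * (2 * 2 ^ r * q) ^ r := by gcongr
    _ = 3 * 2 ^ ((r + 1) * r) * q ^ r := by rw [← pow_succ', mul_pow, ← pow_mul, mul_assoc]
    _ ≤ 3 * 2 ^ (2 * (r + m) + m + 3) * q ^ r := by gcongr; exacts [one_le_two, by linarith]
    _ = 6 * 4 * ((2 ^ 2) ^ (r + m) * (q ^ r * 2 ^ m)) := by rw [← pow_mul]; ring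
    _ ≤ 6 * r * (4 ^ (r + m) * (q ^ r * q ^ m)) := by gcongr; norm_num
    _ = 6 * r * (4 * q) ^ (r + m) := by rw [← pow_add, mul_pow]

lemma rpow_one_div_two_pow_sub_one_pow (hs : s ≠ 0) {x : ℝ} (hx : 0 ≤ x) :
    (x ^ (1 / ((2 : ℝ) ^ s - 1))) ^ (2 ^ s - 1) = x := by
  have hcast : (2 : ℝ) ^ s - 1 = ((2 ^ s - 1 : ℕ) : ℝ) := by
    rw [Nat.cast_sub Nat.one_le_two_pow]
    norm_num
  rw [hcast, one_div]
  exact Real.rpow_inv_natCast_pow hx (Nat.sub_ne_zero_of_lt (Nat.one_lt_two_pow hs))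

lemma two_mul_floor_ell_pow_le (hs : s ≠ 0) (hs2 : s ≠ 2) {x : ℝ} (hx : 0 ≤ x) :
    (2 * ⌊ell s x⌋₊ : ℝ) ^ (2 ^ s - 1) ≤ x := by
  have hell : ell s x = 1 / 2 * x ^ (1 / ((2 : ℝ) ^ s - 1)) := if_neg hs2
  have hfloor : (⌊ell s x⌋₊ : ℝ) ≤ ell s x := Nat.floor_le (by rw [hell]; positivity)
  calc (2 * ⌊ell s x⌋₊ : ℝ) ^ (2 ^ s - 1) ≤ (x ^ (1 / ((2 : ℝ) ^ s - 1))) ^ (2 ^ s - 1) := by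
        gcongr
        linarith
    _ = x := rpow_one_div_two_pow_sub_one_pow hs hx

lemma floor_ell_pow_le (hs : s ≠ 0) {x : ℝ} (hx : 0 ≤ x) :
    (⌊ell s x⌋₊ : ℝ) ^ (2 ^ s - 1) ≤ x := by
  by_cases hs2 : s = 2
  · subst hs2
    have hell : ell 2 x = x ^ (1 / ((2 : ℝ) ^ 2 - 1)) := by norm_num [ell]
    calc (⌊ell 2 x⌋₊ : ℝ) ^ (2 ^ 2 - 1) ≤ ell 2 x ^ (2 ^ 2 - 1) := by
          gcongr
          exact Nat.floor_le (by rw [hell]; positivity)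
      _ = x := by rw [hell, rpow_one_div_two_pow_sub_one_pow hs hx]
  · refine le_trans ?_ (two_mul_floor_ell_pow_le hs hs2 hx)
    gcongr
    linarith [Nat.cast_nonneg (α := ℝ) ⌊ell s x⌋₊]

lemma six_mul_pow_le_of_pow_le_div {a D : ℕ} (hr : r ≠ 0) (h : (a : ℝ) ^ D ≤ n / (6 * r)) :
    6 * r * a ^ D ≤ n := by
  rw [le_div_iff₀ (by positivity), mul_comm] at h
  exact_mod_cast h

lemma IsMatching.min_le_twinMax_of_le_three (hM : IsMatching r M) (hr : r = 2 ∨ r = 3)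
    (hk : 3 * (r - 1) * k ^ (2 ^ (r - 1) - 1) ≤ #M) :
    min (2 * minTwins r (#M / 3)) (permTau k) ≤ twinMax M := by
  rcases hM.two_mul_minTwins_le_or_exists_splitsAt (by omega) with
    h | ⟨c, q, hq, hqr, S, hS, hcard, hsplit⟩
  · exact (min_le_left _ _).trans h
  · have hkS : k ^ (2 ^ (r - 1) - 1) ≤ #S :=
      Nat.le_of_mul_le_mul_left (hk.trans hcard) (by omega)
    obtain ⟨p, j₀, hp, C, hC, rfl, hclique⟩ := exists_isCliqueOn_compl hr (hM.subset hS) hq hqr hkS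
    exact (min_le_right _ _).trans
      (permTau_le_twinMax_of_splitsAt hM (hC.trans hS) (hsplit.subset hC) hp hclique)

lemma IsOrderedMatching.permTau_le_twinMax_of_four_le (hM : IsOrderedMatching r n M) (hr : 4 ≤ r)
    (hk : 6 * r * (2 * k) ^ (2 ^ (r - 1) - 1) ≤ n) : permTau k ≤ twinMax M := by
  have hr0 : r ≠ 0 := by omega
  have hqk := two_mul_permTau_le k
  obtain hq | hq | hq : permTau k = 0 ∨ permTau k = 1 ∨ 2 ≤ permTau k := by omega
  · exact hq ▸ Nat.zero_le _
  · refine hq ▸ hM.1.one_le_twinMax hr0 (hM.2.1.symm ▸ le_trans ?_ hk)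
    have := Nat.one_le_pow (2 ^ (r - 1) - 1) (2 * k) (by omega)
    nlinarith
  · refine hM.le_twinMax hr0 ((three_mul_pow_le hr hq).trans (le_trans ?_ hk))
    exact Nat.mul_le_mul_left _ (Nat.pow_le_pow_left (by omega) _)

end Recurrence

theorem main_lemma_double_recurrence_general (r n : ℕ) (hr : 2 ≤ r) :
    min (2 * minTwins r (n / 3)) (permTau ⌊ell (r - 1) ((n : ℝ) / (6 * r))⌋₊) ≤ minTwins r n := by
  have hr0 : r ≠ 0 := by omega
  have hs : r - 1 ≠ 0 := by omega
  have hx : 0 ≤ (n : ℝ) / (6 * r) := by positivity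
  obtain ⟨M, hM, hMmin⟩ := exists_twinMax_eq_minTwins hr0 n
  rw [← hMmin]
  obtain hr3 | hr4 : (r = 2 ∨ r = 3) ∨ 4 ≤ r := by omega
  · have hk := six_mul_pow_le_of_pow_le_div hr0 (floor_ell_pow_le hs hx)
    have h := hM.1.min_le_twinMax_of_le_three hr3 (hM.2.1.symm ▸ le_trans (by gcongr <;> omega) hk)
    rwa [hM.2.1] at h
  · have hk := two_mul_floor_ell_pow_le hs (by omega) hx
    exact (min_le_right _ _).trans (hM.permTau_le_twinMax_of_four_le hr4
      (six_mul_pow_le_of_pow_le_div hr0 (by exact_mod_cast hk)))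

/-- Lemma 3.2, `double_ind`. For all `n ≥ 1` and `r ≥ 2`,
`t^(r)(n) ≥ min{t₀, t₁, t₂}` where `t₀ = 2·t^(r)(⌊n/3⌋)`,
`t₁ = τ(⌊ℓ_{r-1}(n/(6r))⌋)`, and
`t₂ = min_{2 ≤ p ≤ r-2} max{t^{(r-p)}(⌊ℓ_p(n/(6r))⌋), t^{(p)}(⌊ℓ_{r-p}(n/(6r))⌋)}`,
with `t₂ = n` when the range `2 ≤ p ≤ r-2` is empty (i.e. for `r ≤ 3`). -/
theorem main_lemma_double_recurrence (r n : ℕ) (hr : 2 ≤ r) (hn : 1 ≤ n) :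
    min (min (2 * minTwins r (n / 3))
             (permTau ⌊ell (r - 1) ((n : ℝ) / (6 * r))⌋₊))
        (if 4 ≤ r then
          sInf {v : ℕ | ∃ p : ℕ, 2 ≤ p ∧ p ≤ r - 2 ∧
            v = max (minTwins (r - p) ⌊ell p ((n : ℝ) / (6 * r))⌋₊)
                    (minTwins p ⌊ell (r - p) ((n : ℝ) / (6 * r))⌋₊)}
        else n)
      ≤ minTwins r n :=
  (min_le_left _ _).trans (main_lemma_double_recurrence_general r n hr)
end

section
/- For all integers r ≥ 2 and n ≥ 1, L_r(n) ≥ (1/2)·n^{1/(2^r − 1)}; that is, every ordered r-matching of size n contains, for some r-pattern P, a P-clique of size at least (1/2)·n^{1/(2^r − 1)}. -/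
/-!
Suppose that, for every `s` in a set `S` of positions containing the first one, the vertices of all
edges at positions below `s` precede those at positions from `s` on. Then `S` cuts every edge into
the same `#S` blocks, and vertices in different blocks compare in a forced way. Prescribing in which
blocks two edges appear in reversed order gives, up to a global reversal, `2 ^ (#S - 1)` strict
orders on the edges whose chains are cliques. If all cliques have size at most `L`, Mirsky's theorem
applied to each of these orders leaves, at the cost of a factor `L ^ 2 ^ (#S - 1)`, edges that are
pairwise incomparable in all of them. Any two such edges interleave inside some block, so that the
first vertex of one edge in this block splits the other edge at a position `j` outside `S`. By
averaging, some single vertex splits at the same `j` a proportion at least `1 / (2 (r - #S))` of the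
edges, which makes `j` a new cut for these edges. After `r` rounds at most one edge is left, hence
`n ≤ L ^ (2 ^ r - 1) * 2 ^ (r - 1) * (r - 1)! ≤ (2 * L) ^ (2 ^ r - 1)`.
-/

namespace OrderedMatching

open Finset Function

section Counting

lemma two_pow_mul_factorial_le (m : ℕ) : 2 ^ m * m.factorial ≤ 2 ^ (2 ^ (m + 1) - 1) := by
  induction m with
  | zero => simp
  | succ m ih =>
    have hexp : 2 ^ (m + 1 + 1) - 1 = 2 ^ (m + 1) + (2 ^ (m + 1) - 1) := by
      have := Nat.one_le_two_pow (n := m + 1)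
      omega
    have hstep : 2 * (m + 1) ≤ 2 ^ 2 ^ (m + 1) := calc
      2 * (m + 1) ≤ 2 * 2 ^ m := by gcongr; exact Nat.lt_two_pow_self
      _ = 2 ^ (m + 1) := by ring
      _ ≤ 2 ^ 2 ^ (m + 1) := Nat.lt_two_pow_self.le
    calc 2 ^ (m + 1) * (m + 1).factorial = 2 * (m + 1) * (2 ^ m * m.factorial) := by
          rw [Nat.factorial_succ]; ring
      _ ≤ 2 ^ 2 ^ (m + 1) * 2 ^ (2 ^ (m + 1) - 1) := Nat.mul_le_mul hstep ih
      _ = 2 ^ (2 ^ (m + 1 + 1) - 1) := by rw [hexp, ← pow_add]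

variable {α κ : Type*}

lemma chainHeight_add_one_le {R : α → α → Prop} {s t : Set α} {a : α} (hst : s ⊆ t) (hat : a ∈ t)
    (hsa : ∀ b ∈ s, R b a) (haa : ¬ R a a) : s.chainHeight R + 1 ≤ t.chainHeight R := by
  have : Nonempty {C : Set α // C ⊆ s ∧ IsChain R C} := ⟨∅, by simp⟩
  rw [Set.chainHeight, ENat.iSup_add]
  refine iSup_le fun ⟨C, hCs, hC⟩ => ?_
  have haC : a ∉ C := fun h => haa (hsa a (hCs h))
  rw [← Set.encard_insert_of_notMem haC]
  exact Set.encard_le_chainHeight_of_isChain _ _ (Set.insert_subset hat (hCs.trans hst))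
    (hC.insert fun b hb _ => Or.inr (hsa b (hCs hb)))

-- Mirsky's theorem: the levels of `h` are antichains.
lemma exists_height_lt_of_forall_isChain_card_le {R : α → α → Prop} [IsStrictOrder α R]
    {F : Finset α} {L : ℕ} (hL : ∀ C ⊆ F, IsChain R (C : Set α) → #C ≤ L) :
    ∃ h : α → ℕ, (∀ a ∈ F, h a < L) ∧ ∀ a ∈ F, ∀ b ∈ F, R a b → h a < h b := by
  let below (a : α) : Set α := {b ∈ (F : Set α) | R b a}
  have hfin (a : α) : (below a).chainHeight R ≠ ⊤ :=
    Set.chainHeight_ne_top_of_finite _ _ (F.finite_toSet.subset (Set.sep_subset _ _))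
  have hF : (F : Set α).chainHeight R ≤ L := by
    obtain ⟨C, hCF, hcard, hC⟩ := Set.exists_eq_chainHeight_of_finite (F : Set α) R F.finite_toSet
    lift C to Finset α using F.finite_toSet.subset hCF
    rw [← hcard, Set.encard_coe_eq_coe_finsetCard]
    exact_mod_cast hL C (mod_cast hCF) hC
  refine ⟨fun a => ((below a).chainHeight R).toNat, fun a ha => ?_, fun a ha b _ hab => ?_⟩
  · have h : (below a).chainHeight R + 1 ≤ L :=
      (chainHeight_add_one_le (Set.sep_subset _ _) ha (fun _ => And.right) (irrefl a)).trans hF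
    rw [← ENat.natCast_toNat (hfin a)] at h
    exact_mod_cast h
  · have h : (below a).chainHeight R + 1 ≤ (below b).chainHeight R :=
      chainHeight_add_one_le (fun _ hc => ⟨hc.1, _root_.trans hc.2 hab⟩) ⟨ha, hab⟩
        (fun _ hc => hc.2) (irrefl a)
    rw [← ENat.natCast_toNat (hfin a), ← ENat.natCast_toNat (hfin b)] at h
    exact_mod_cast h

lemma card_le_pow_mul_of_isChain_of_isAntichain {R : κ → α → α → Prop} {I : Finset κ}
    {F : Finset α} {L k : ℕ} (hR : ∀ i ∈ I, IsStrictOrder α (R i))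
    (hchain : ∀ i ∈ I, ∀ C ⊆ F, IsChain (R i) (C : Set α) → #C ≤ L)
    (hanti : ∀ A ⊆ F, (∀ i ∈ I, IsAntichain (R i) (A : Set α)) → #A ≤ k) :
    #F ≤ L ^ #I * k := by
  classical
  have hheight (i : I) :=
    have := hR i i.2
    exists_height_lt_of_forall_isChain_card_le (hchain i i.2)
  choose h hlt hmono using hheight
  let levels : Finset (I → ℕ) := Fintype.piFinset fun _ => range L
  have hmaps : ∀ a ∈ F, (fun i => h i a) ∈ levels := fun a ha =>
    Fintype.mem_piFinset.2 fun i => mem_range.2 (hlt i a ha)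
  have hlevel : ∀ l ∈ levels, #{a ∈ F | (fun i => h i a) = l} ≤ k := by
    refine fun l _ => hanti _ (filter_subset _ _) fun i hi a ha b hb _ hab => ?_
    obtain ⟨haF, hal⟩ := mem_filter.1 ha
    obtain ⟨hbF, hbl⟩ := mem_filter.1 hb
    exact (hmono ⟨i, hi⟩ a haF b hbF hab).ne (congr_fun (hal.trans hbl.symm) ⟨i, hi⟩)
  calc #F ≤ k * #levels := card_le_mul_card_image_of_maps_to hmaps k hlevel
    _ = L ^ #I * k := by simp [levels, mul_comm]

lemma card_le_two_mul_of_forall_or {H : κ → α → α → Prop} {J : Finset κ} {F : Finset α} {k : ℕ}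
    (hcover : ∀ e ∈ F, ∀ f ∈ F, ∃ j ∈ J, H j e f ∨ H j f e)
    (hk : ∀ j ∈ J, ∀ e ∈ F, ∀ G ⊆ F, (∀ f ∈ G, H j e f) → #G ≤ k) :
    #F ≤ 2 * #J * k := by
  classical
  let D (e f : α) : Prop := ∃ j ∈ J, H j e f
  have hout : ∀ e ∈ F, #{f ∈ F | D e f} ≤ #J * k := fun e he => by
    have hunion : {f ∈ F | D e f} = J.biUnion fun j => {f ∈ F | H j e f} := by
      ext f; simp only [D, mem_filter, mem_biUnion]; tauto
    rw [hunion]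
    exact card_biUnion_le_card_mul _ _ _ fun j hj =>
      hk j hj e he _ (filter_subset _ _) fun f hf => (mem_filter.1 hf).2
  have hall : ∀ e ∈ F, #F ≤ #{f ∈ F | D e f} + #{f ∈ F | D f e} := fun e he => by
    refine (card_le_card fun f hf => ?_).trans (card_union_le _ _)
    obtain ⟨j, hj, h | h⟩ := hcover e he f hf
    · exact mem_union_left _ (mem_filter.2 ⟨hf, j, hj, h⟩)
    · exact mem_union_right _ (mem_filter.2 ⟨hf, j, hj, h⟩)
  have hswap : ∑ e ∈ F, #{f ∈ F | D f e} = ∑ e ∈ F, #{f ∈ F | D e f} :=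
    (sum_card_bipartiteAbove_eq_sum_card_bipartiteBelow D).symm
  have hsq : #F * #F ≤ #F * (2 * #J * k) := calc
    #F * #F ≤ ∑ e ∈ F, (#{f ∈ F | D e f} + #{f ∈ F | D f e}) := by
      simpa using sum_le_sum hall
    _ = 2 * ∑ e ∈ F, #{f ∈ F | D e f} := by rw [sum_add_distrib, hswap, two_mul]
    _ ≤ 2 * (#F * (#J * k)) := by
      gcongr
      exact sum_le_card_nsmul _ _ _ hout
    _ = #F * (2 * #J * k) := by ring
  rcases F.eq_empty_or_nonempty with rfl | hF
  · simp
  · exact Nat.le_of_mul_le_mul_left hsq hF.card_pos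

end Counting

section Blocks

variable {ι : Type*} [LinearOrder ι] [OrderBot ι] {S : Finset ι} {s x y : ι}

/-- The elements of `S`, together with `⊥`, cut `ι` into consecutive blocks; `blockStart S x` is the
least element of the block containing `x`. -/
def blockStart (S : Finset ι) (x : ι) : ι := {s ∈ S | s ≤ x}.sup id

lemma blockStart_le (S : Finset ι) (x : ι) : blockStart S x ≤ x :=
  Finset.sup_le fun _ hs => (mem_filter.1 hs).2

lemma le_blockStart (hs : s ∈ S) (hsx : s ≤ x) : s ≤ blockStart S x :=
  le_sup (f := id) (mem_filter.2 ⟨hs, hsx⟩)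

lemma blockStart_mem (hS : ⊥ ∈ S) (x : ι) : blockStart S x ∈ S := by
  obtain ⟨s, hs, hsup⟩ := exists_mem_eq_sup {s ∈ S | s ≤ x} ⟨⊥, mem_filter.2 ⟨hS, bot_le⟩⟩ id
  rw [blockStart, hsup]
  exact (mem_filter.1 hs).1

lemma blockStart_lt (hS : ⊥ ∈ S) (hx : x ∉ S) : blockStart S x < x :=
  (blockStart_le S x).lt_of_ne fun h => hx (h ▸ blockStart_mem hS x)

lemma blockStart_eq_of_le_of_le (hS : ⊥ ∈ S) (hxy : blockStart S x ≤ y) (hyx : y ≤ x) :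
    blockStart S y = blockStart S x :=
  le_antisymm (le_blockStart (blockStart_mem hS y) ((blockStart_le S y).trans hyx))
    (le_blockStart (blockStart_mem hS x) hxy)

lemma lt_blockStart (hS : ⊥ ∈ S) (h : blockStart S x < blockStart S y) : x < blockStart S y :=
  lt_of_not_ge fun hyx => h.not_ge (le_blockStart (blockStart_mem hS y) hyx)

end Blocks

section Families

variable {α ι β : Type*} [LinearOrder ι] [LinearOrder β] {v : α → ι → β} {F G : Finset α}

/-- Abstract form of a clique, for edges `e : α` with vertices `v e x` listed in increasing order:
all pairs of edges in `C`, suitably ordered, compare in the same way, recorded by `R`. -/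
def IsHomogeneous (v : α → ι → β) (C : Finset α) : Prop :=
  ∃ R : ι → ι → Prop, IsChain (fun e f => ∀ x y, v e x < v f y ↔ R x y) (C : Set α)

/-- For all edges in `F`, the vertices with index below `s` precede those with index at least
`s`. -/
def IsCutAt (v : α → ι → β) (F : Finset α) (s : ι) : Prop :=
  ∀ e ∈ F, ∀ f ∈ F, ∀ x < s, ∀ y ≥ s, v e x < v f y

lemma IsCutAt.mono {s : ι} (h : IsCutAt v F s) (hGF : G ⊆ F) : IsCutAt v G s :=
  fun e he f hf => h e (hGF he) f (hGF hf)

variable [OrderBot ι] {S T : Finset ι} {e f : α}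

/-- In each block of `S`, all vertices of `e` precede all vertices of `f`, except that the order is
reversed in the blocks whose start lies in `T`. -/
def Precedes (v : α → ι → β) (S T : Finset ι) (e f : α) : Prop :=
  ∀ x y, blockStart S x = blockStart S y →
    if blockStart S x ∈ T then v f y < v e x else v e x < v f y

lemma isStrictOrder_precedes (hT : ⊥ ∉ T) : IsStrictOrder α (Precedes v S T) where
  irrefl e h := by
    have hbot : blockStart S ⊥ = ⊥ := le_bot_iff.1 (blockStart_le S ⊥)
    simpa [hbot, hT] using h ⊥ ⊥ rfl
  trans e f g hef hfg x y hxy := by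
    have hx := hef x x rfl
    have hy := hfg x y hxy
    split_ifs at hx hy ⊢
    · exact hy.trans hx
    · exact hx.trans hy

lemma lt_of_blockStart_lt (hS : ⊥ ∈ S) (hcut : ∀ s ∈ S, IsCutAt v F s) (he : e ∈ F) (hf : f ∈ F)
    {x y : ι} (h : blockStart S x < blockStart S y) : v e x < v f y :=
  hcut _ (blockStart_mem hS y) e he f hf x (lt_blockStart hS h) y (blockStart_le S y)

lemma Precedes.lt_iff (hS : ⊥ ∈ S) (hcut : ∀ s ∈ S, IsCutAt v F s) (he : e ∈ F) (hf : f ∈ F)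
    (h : Precedes v S T e f) (x y : ι) :
    v e x < v f y ↔ blockStart S x < blockStart S y ∨
      blockStart S x = blockStart S y ∧ blockStart S x ∉ T := by
  rcases lt_trichotomy (blockStart S x) (blockStart S y) with hxy | hxy | hxy
  · simp [hxy, lt_of_blockStart_lt hS hcut he hf hxy]
  · have hpair := h x y hxy
    split_ifs at hpair with hx
    · simp [hxy, hxy ▸ hx, hpair.le]
    · simp [hxy, hxy ▸ hx, hpair]
  · simp [hxy.not_gt, hxy.ne', (lt_of_blockStart_lt hS hcut hf he hxy).le]

lemma isHomogeneous_of_isChain_precedes (hS : ⊥ ∈ S) (hcut : ∀ s ∈ S, IsCutAt v F s)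
    (hF : IsChain (Precedes v S T) (F : Set α)) : IsHomogeneous v F :=
  ⟨_, fun _ he _ hf hne => (hF he hf hne).imp (fun h => h.lt_iff hS hcut he hf)
    (fun h => h.lt_iff hS hcut hf he)⟩

/-- No two edges of `A` are comparable by any of the relations `Precedes v S T`. The sets `T` range
over those avoiding `⊥` because `T` and `S \ T` give opposite relations. -/
def IsPrecedesFree (v : α → ι → β) (S : Finset ι) (A : Finset α) : Prop :=
  ∀ T ∈ (S.erase ⊥).powerset, IsAntichain (Precedes v S T) (A : Set α)

lemma card_le_pow_mul_of_forall_isPrecedesFree {L : ℕ}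
    (hL : ∀ C, IsHomogeneous v C → #C ≤ L) (hS : ⊥ ∈ S)
    (hcut : ∀ s ∈ S, IsCutAt v F s) {k : ℕ} (hk : ∀ A ⊆ F, IsPrecedesFree v S A → #A ≤ k) :
    #F ≤ L ^ 2 ^ (#S - 1) * k := by
  rw [← card_erase_of_mem hS, ← card_powerset]
  refine card_le_pow_mul_of_isChain_of_isAntichain (R := Precedes v S)
    (fun T hT => isStrictOrder_precedes fun h => ?_) (fun T _ C hC hchain => hL C ?_) hk
  · exact notMem_erase ⊥ S (mem_powerset.1 hT h)
  · exact isHomogeneous_of_isChain_precedes hS (fun s hs => (hcut s hs).mono hC) hchain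

/-- The vertex of `e` starting the block of `j` lies between the vertices of `f` with index below
`j` and those with index at least `j`, so that it witnesses a possible new cut at `j`. -/
def Splits (v : α → ι → β) (S : Finset ι) (j : ι) (e f : α) : Prop :=
  (∀ i < j, v f i ≤ v e (blockStart S j)) ∧ v e (blockStart S j) < v f j

lemma isCutAt_of_splits (hv : ∀ e, StrictMono (v e)) {j : ι} (h : ∀ f ∈ F, Splits v S j e f) :
    IsCutAt v F j := fun f hf g hg x hx y hy =>
  calc v f x ≤ v e (blockStart S j) := (h f hf).1 x hx
    _ < v g j := (h g hg).2
    _ ≤ v g y := (hv g).monotone hy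

variable [Fintype ι]

lemma exists_splits_self (hv : ∀ e, StrictMono (v e)) (hS : ⊥ ∈ S) (hne : Sᶜ.Nonempty) (e : α) :
    ∃ j ∈ Sᶜ, Splits v S j e e := by
  obtain ⟨j, hj, hmin⟩ := exists_min_image Sᶜ id hne
  refine ⟨j, hj, fun i hi => (hv e).monotone (le_blockStart ?_ hi.le),
    hv e (blockStart_lt hS (mem_compl.1 hj))⟩
  by_contra hiS
  exact hi.not_ge (hmin i (mem_compl.2 hiS))

lemma lt_of_forall_not_splits (hv : ∀ e, StrictMono (v e)) (hinj : Injective2 v) (hS : ⊥ ∈ S)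
    (hef : e ≠ f) (hsplit : ∀ j ∈ Sᶜ, ¬ Splits v S j e f) {x y : ι}
    (hxy : blockStart S x = blockStart S y)
    (hlt : v f (blockStart S x) < v e (blockStart S x)) : v f x < v e y := by
  suffices hx : v f x < v e (blockStart S x) from
    hx.trans_le ((hv e).monotone (hxy ▸ blockStart_le S y))
  by_contra hx
  have hx : v e (blockStart S x) < v f x :=
    (not_lt.1 hx).lt_of_ne fun h => hef (hinj h).1
  obtain ⟨j, hj, hmin⟩ := exists_min_image ({i | v e (blockStart S x) < v f i} : Finset ι) id
    ⟨x, by simpa using hx⟩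
  have hj : v e (blockStart S x) < v f j := by simpa using hj
  have hmin (i : ι) (hi : i < j) : v f i ≤ v e (blockStart S x) := by
    by_contra h
    exact hi.not_ge (hmin i (by simpa using h))
  have hstart : blockStart S x < j := (hv f).lt_iff_lt.1 (hlt.trans hj)
  have hjx : j ≤ x := le_of_not_gt fun h => (hmin x h).not_gt hx
  have hjS : j ∉ S := fun h => hstart.not_ge (le_blockStart h hjx)
  refine hsplit j (mem_compl.2 hjS) ?_
  rw [Splits, blockStart_eq_of_le_of_le hS hstart.le hjx]
  exact ⟨hmin, hj⟩

lemma exists_precedes_of_forall_not_splits (hv : ∀ e, StrictMono (v e)) (hinj : Injective2 v)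
    (hS : ⊥ ∈ S) (hef : v e ⊥ < v f ⊥) (hsplit : ∀ j ∈ Sᶜ, ¬ Splits v S j e f)
    (hsplit' : ∀ j ∈ Sᶜ, ¬ Splits v S j f e) :
    ∃ T ∈ (S.erase ⊥).powerset, Precedes v S T e f := by
  have hne : e ≠ f := by rintro rfl; exact hef.false
  refine ⟨{s ∈ S | v f s < v e s}, mem_powerset.2 fun s hs => ?_, fun x y hxy => ?_⟩
  · obtain ⟨hsS, hs⟩ := mem_filter.1 hs
    refine mem_erase.2 ⟨?_, hsS⟩
    rintro rfl
    exact hef.not_gt hs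
  · simp only [mem_filter, blockStart_mem hS, true_and]
    split_ifs with h
    · exact lt_of_forall_not_splits hv hinj hS hne hsplit hxy.symm (hxy ▸ h)
    · exact lt_of_forall_not_splits hv hinj hS hne.symm hsplit' hxy
        ((not_lt.1 h).lt_of_ne fun h => hne (hinj h).1)

lemma exists_splits_or_exists_precedes (hv : ∀ e, StrictMono (v e)) (hinj : Injective2 v)
    (hS : ⊥ ∈ S) (hef : e ≠ f) :
    (∃ j ∈ Sᶜ, Splits v S j e f ∨ Splits v S j f e) ∨
      ∃ T ∈ (S.erase ⊥).powerset, Precedes v S T e f ∨ Precedes v S T f e := by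
  refine or_iff_not_imp_left.2 fun hsplit => ?_
  push Not at hsplit
  rcases lt_or_gt_of_ne fun h => hef (hinj h : e = f ∧ (⊥ : ι) = ⊥).1 with h | h
  · obtain ⟨T, hT, hprec⟩ := exists_precedes_of_forall_not_splits hv hinj hS h
      (fun j hj => (hsplit j hj).1) (fun j hj => (hsplit j hj).2)
    exact ⟨T, hT, .inl hprec⟩
  · obtain ⟨T, hT, hprec⟩ := exists_precedes_of_forall_not_splits hv hinj hS h
      (fun j hj => (hsplit j hj).2) (fun j hj => (hsplit j hj).1)
    exact ⟨T, hT, .inr hprec⟩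

lemma IsPrecedesFree.exists_splits (hv : ∀ e, StrictMono (v e)) (hinj : Injective2 v) (hS : ⊥ ∈ S)
    (hF : IsPrecedesFree v S F) (he : e ∈ F) (hf : f ∈ F) (hef : e ≠ f) :
    ∃ j ∈ Sᶜ, Splits v S j e f ∨ Splits v S j f e := by
  refine (exists_splits_or_exists_precedes hv hinj hS hef).resolve_right ?_
  rintro ⟨T, hT, h | h⟩
  exacts [hF T hT he hf hef h, hF T hT hf he hef.symm h]

lemma IsPrecedesFree.card_le_one (hv : ∀ e, StrictMono (v e)) (hinj : Injective2 v)
    (hF : IsPrecedesFree v univ F) : #F ≤ 1 := by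
  refine Finset.card_le_one.2 fun e he f hf => ?_
  by_contra hef
  simpa using hF.exists_splits hv hinj (mem_univ ⊥) he hf hef

lemma IsPrecedesFree.card_le_two_mul (hv : ∀ e, StrictMono (v e)) (hinj : Injective2 v)
    (hS : ⊥ ∈ S) (hne : Sᶜ.Nonempty) (hF : IsPrecedesFree v S F) {k : ℕ}
    (hk : ∀ j ∈ Sᶜ, ∀ G ⊆ F, IsCutAt v G j → #G ≤ k) : #F ≤ 2 * #Sᶜ * k := by
  refine card_le_two_mul_of_forall_or (H := Splits v S) (fun e he f hf => ?_)
    fun j hj e _ G hG hsplit => hk j hj G hG (isCutAt_of_splits hv hsplit)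
  rcases eq_or_ne e f with rfl | hef
  · simpa using exists_splits_self hv hS hne e
  · exact hF.exists_splits hv hinj hS he hf hef

variable {L : ℕ}

lemma card_le_of_forall_isCutAt (hv : ∀ e, StrictMono (v e)) (hinj : Injective2 v)
    (hL : ∀ C, IsHomogeneous v C → #C ≤ L) (m k : ℕ) (hS : ⊥ ∈ S) (hk : #S = k + 1) (hm : #Sᶜ = m)
    (hcut : ∀ s ∈ S, IsCutAt v F s) :
    #F ≤ L ^ (2 ^ k * (2 ^ (m + 1) - 1)) * (2 ^ m * m.factorial) := by
  induction m generalizing k S F with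
  | zero =>
    obtain rfl : S = univ := by simpa using hm
    simpa [hk] using card_le_pow_mul_of_forall_isPrecedesFree hL hS hcut
      fun A _ hA => hA.card_le_one hv hinj
  | succ m ih =>
    have hround (A : Finset α) (hAF : A ⊆ F) (hA : IsPrecedesFree v S A) :
        #A ≤ 2 * #Sᶜ * (L ^ (2 ^ (k + 1) * (2 ^ (m + 1) - 1)) * (2 ^ m * m.factorial)) := by
      refine hA.card_le_two_mul hv hinj hS (card_pos.1 (by omega)) fun j hj G hG hcutj => ?_
      have hjS : j ∉ S := mem_compl.1 hj
      refine ih (k + 1) (mem_insert_of_mem hS) (by rw [card_insert_of_notMem hjS, hk]) ?_ ?_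
      · rw [compl_insert, card_erase_of_mem hj, hm, Nat.add_sub_cancel]
      · exact forall_mem_insert _ _ _ |>.2 ⟨hcutj, fun s hs => (hcut s hs).mono (hG.trans hAF)⟩
    have hexp : 2 ^ k * (2 ^ (m + 1 + 1) - 1) = 2 ^ k + 2 ^ (k + 1) * (2 ^ (m + 1) - 1) := by
      have : 2 ^ (m + 1 + 1) - 1 = 1 + 2 * (2 ^ (m + 1) - 1) := by
        have := Nat.one_le_two_pow (n := m + 1)
        omega
      rw [this]
      ring
    calc #F ≤ L ^ 2 ^ (#S - 1) *
          (2 * #Sᶜ * (L ^ (2 ^ (k + 1) * (2 ^ (m + 1) - 1)) * (2 ^ m * m.factorial))) :=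
        card_le_pow_mul_of_forall_isPrecedesFree hL hS hcut hround
      _ = _ := by
        rw [hexp, hk, hm, Nat.add_sub_cancel, Nat.factorial_succ]
        ring

theorem card_le_two_mul_pow_of_forall_isHomogeneous (hv : ∀ e, StrictMono (v e))
    (hinj : Injective2 v) (hL : ∀ C, IsHomogeneous v C → #C ≤ L) (F : Finset α) :
    #F ≤ (2 * L) ^ (2 ^ Fintype.card ι - 1) := by
  obtain ⟨m, hm⟩ : ∃ m, Fintype.card ι = m + 1 := Nat.exists_eq_succ_of_ne_zero Fintype.card_ne_zero
  have hcut : ∀ s ∈ ({⊥} : Finset ι), IsCutAt v F s := by simp [IsCutAt]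
  have hcompl : #({⊥} : Finset ι)ᶜ = m := by simp [card_compl, hm]
  calc #F ≤ L ^ (2 ^ (m + 1) - 1) * (2 ^ m * m.factorial) := by
        simpa using
          card_le_of_forall_isCutAt hv hinj hL m 0 (mem_singleton_self ⊥) (by simp) hcompl hcut
    _ ≤ L ^ (2 ^ (m + 1) - 1) * 2 ^ (2 ^ (m + 1) - 1) := by
        gcongr
        exact two_pow_mul_factorial_le m
    _ = (2 * L) ^ (2 ^ Fintype.card ι - 1) := by rw [hm, mul_comm 2 L, mul_pow]

end Families

section Edges

variable {α ι : Type*} [Fintype ι]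

/-- The vertex set of the edge `e` of a family `v` listing the vertices of each edge. -/
def edge (v : α → ι → ℕ) (e : α) : Finset ℕ := univ.image (v e)

lemma disjoint_edge {v : α → ι → ℕ} (hinj : Injective2 v) {e f : α} (hef : e ≠ f) :
    Disjoint (edge v e) (edge v f) := by
  simp only [edge, disjoint_left, mem_image, mem_univ, true_and]
  rintro _ ⟨x, rfl⟩ ⟨y, h⟩
  exact hef (hinj h).1.symm

variable [Fintype α]

/-- The set of all edges of a family `v` listing the vertices of each edge. -/
def edges (v : α → ι → ℕ) : Finset (Finset ℕ) := univ.image (edge v)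

/-- The family obtained from `v` by replacing each vertex by its rank among all vertices of `v`,
starting from rank `1`. It represents the isomorphism class of `v` on an initial segment. -/
def standardize (v : α → ι → ℕ) (e : α) (x : ι) : ℕ := #{p : α × ι | v p.1 p.2 ≤ v e x}

variable {v w : α → ι → ℕ}

lemma mSupport_edges (v : α → ι → ℕ) : mSupport (edges v) = univ.image (uncurry v) := by
  ext z
  simp [mSupport, edges, edge, mem_sup]

lemma isMatching_edges (hinj : Injective2 v) : IsMatching (Fintype.card ι) (edges v) := by
  simp only [IsMatching, edges, mem_image, mem_univ, true_and, forall_exists_index,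
    forall_apply_eq_imp_iff]
  exact ⟨fun e => card_image_of_injective _ (hinj.right e),
    fun e f hef => disjoint_edge hinj fun h => hef (h ▸ rfl)⟩

lemma card_edges [Nonempty ι] (hinj : Injective2 v) : #(edges v) = Fintype.card α := by
  refine card_image_of_injective _ fun e f hef => ?_
  by_contra hne
  have hdisj := disjoint_edge hinj hne
  rw [← hef, disjoint_self, bot_eq_empty] at hdisj
  exact (univ_nonempty.image (v e)).ne_empty hdisj

lemma matchIso_edges (hinj : Injective2 v)
    (hlt : ∀ p q, uncurry v p < uncurry v q → uncurry w p < uncurry w q) :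
    MatchIso (edges v) (edges w) := by
  have hinj := hinj.uncurry
  let φ : ℕ → ℕ := extend (uncurry v) (uncurry w) id
  have hφ (p : α × ι) : φ (uncurry v p) = uncurry w p := hinj.extend_apply _ _ p
  have hmono : StrictMonoOn φ (mSupport (edges v)) := by
    simp only [mSupport_edges, coe_image, coe_univ, Set.image_univ]
    rintro _ ⟨p, rfl⟩ _ ⟨q, rfl⟩ h
    simpa only [hφ] using hlt p q h
  have himage : φ '' mSupport (edges v) = mSupport (edges w) := by
    simp only [mSupport_edges, coe_image, coe_univ, Set.image_univ, ← Set.range_comp]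
    exact congrArg Set.range (funext hφ)
  refine ⟨φ, himage ▸ hmono.injOn.bijOn_image, fun x hx y hy h => hmono hx hy h, ?_⟩
  rw [edges, edges, image_image]
  refine image_congr fun e _ => ?_
  simp only [edge, comp_apply, image_image]
  exact image_congr fun x _ => (hφ (e, x)).symm

lemma standardize_lt_standardize {p q : α × ι} (h : uncurry v p < uncurry v q) :
    uncurry (standardize v) p < uncurry (standardize v) q := by
  refine card_lt_card (ssubset_iff_of_subset ?_ |>.2 ⟨q, by simp, by simpa [uncurry] using h⟩)
  exact monotone_filter_right _ fun _ _ hp => hp.trans h.le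

lemma injective2_standardize (hinj : Injective2 v) : Injective2 (standardize v) := by
  intro e f x y h
  by_contra hne
  have hne : uncurry v (e, x) ≠ uncurry v (f, y) := fun h => hne (hinj h)
  rcases hne.lt_or_gt with hlt | hlt
  · exact (standardize_lt_standardize hlt).ne h
  · exact (standardize_lt_standardize hlt).ne' h

lemma isOrderedMatching_edges_standardize [Nonempty ι] (hinj : Injective2 v) :
    IsOrderedMatching (Fintype.card ι) (Fintype.card α) (edges (standardize v)) := by
  have hstd := injective2_standardize hinj
  refine ⟨isMatching_edges hstd, card_edges hstd, ?_⟩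
  rw [mSupport_edges]
  refine eq_of_subset_of_card_le (image_subset_iff.2 fun p _ => mem_Icc.2 ⟨?_, ?_⟩) ?_
  · exact card_pos.2 ⟨p, by simp⟩
  · rw [mul_comm, ← Fintype.card_prod]
    exact card_le_univ _
  · rw [card_image_of_injective _ hstd.uncurry]
    simp [mul_comm]

end Edges

section Clique

lemma exists_isOrderedMatching (r n : ℕ) [NeZero r] : ∃ M, IsOrderedMatching r n M := by
  have hinj : Injective2 fun (i : Fin n) (x : Fin r) => (finProdFinEquiv (i, x) : ℕ) :=
    fun _ _ _ _ h => Prod.mk.inj (finProdFinEquiv.injective (Fin.val_injective h))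
  exact ⟨_, by simpa using isOrderedMatching_edges_standardize hinj⟩

variable {α : Type*} {r : ℕ} {v : α → Fin r → ℕ}

lemma edges_pair (v : α → Fin r → ℕ) (e f : α) : edges ![v e, v f] = {edge v e, edge v f} := by
  ext s
  simp [edges, edge, eq_comm]

lemma injective2_pair (hinj : Injective2 v) {e f : α} (hef : e ≠ f) :
    Injective2 ![v e, v f] := by
  intro i j x y h
  fin_cases i <;> fin_cases j
  · exact ⟨rfl, (hinj h).2⟩
  · exact absurd (hinj h).1 hef
  · exact absurd (hinj h).1 hef.symm
  · exact ⟨rfl, (hinj h).2⟩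

lemma isPattern_edges_standardize_pair [NeZero r] (hinj : Injective2 v) {e f : α} (hef : e ≠ f) :
    IsPattern r (edges (standardize ![v e, v f])) := by
  simpa [IsPattern] using isOrderedMatching_edges_standardize (injective2_pair hinj hef)

lemma pair_lt_pair (hv : ∀ e, StrictMono (v e)) (hinj : Injective2 v) {e f e' f' : α}
    (hne : e' ≠ f') (h : ∀ x y, v e x < v f y ↔ v e' x < v f' y) (p q : Fin 2 × Fin r)
    (hpq : uncurry ![v e, v f] p < uncurry ![v e, v f] q) :
    uncurry ![v e', v f'] p < uncurry ![v e', v f'] q := by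
  obtain ⟨i, x⟩ := p
  obtain ⟨j, y⟩ := q
  fin_cases i <;> fin_cases j
  · exact hv e' ((hv e).lt_iff_lt.1 hpq)
  · exact (h x y).1 hpq
  · exact (not_lt.1 fun hlt => hpq.not_gt ((h y x).2 hlt)).lt_of_ne fun heq =>
      hne.symm (hinj heq).1
  · exact hv f' ((hv f).lt_iff_lt.1 hpq)

lemma IsHomogeneous.exists_isPClique [NeZero r] (hv : ∀ e, StrictMono (v e)) (hinj : Injective2 v)
    {C : Finset α} (hC : IsHomogeneous v C) :
    ∃ P, IsPattern r P ∧ IsPClique P (C.image (edge v)) := by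
  obtain ⟨R, hR⟩ := hC
  by_cases hpair : ∃ e f, e ≠ f ∧ ∀ x y, v e x < v f y ↔ R x y
  · obtain ⟨e, f, hef, hefR⟩ := hpair
    have hiso {a b : α} (hab : a ≠ b) (habR : ∀ x y, v a x < v b y ↔ R x y) :
        MatchIso {edge v a, edge v b} (edges (standardize ![v e, v f])) := by
      rw [← edges_pair]
      exact matchIso_edges (injective2_pair hinj hab) fun p q hpq => standardize_lt_standardize
        (pair_lt_pair hv hinj hef (fun x y => (habR x y).trans (hefR x y).symm) p q hpq)
    refine ⟨_, isPattern_edges_standardize_pair hinj hef, ?_⟩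
    simp only [IsPClique, forall_mem_image]
    intro a ha b hb hab
    have hab : a ≠ b := fun h => hab (h ▸ rfl)
    rcases hR ha hb hab with h | h
    · exact hiso hab h
    · exact pair_comm (edge v a) _ ▸ hiso hab.symm h
  · obtain ⟨P, hP⟩ := exists_isOrderedMatching r 2
    refine ⟨P, hP, ?_⟩
    simp only [IsPClique, forall_mem_image]
    intro a ha b hb hab
    have hab : a ≠ b := fun h => hab (h ▸ rfl)
    rcases hR ha hb hab with h | h
    exacts [absurd ⟨a, b, hab, h⟩ hpair, absurd ⟨b, a, hab.symm, h⟩ hpair]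

lemma exists_edge_eq_of_isMatching {M : Finset (Finset ℕ)} (hM : IsMatching r M) :
    ∃ v : M → Fin r → ℕ, (∀ e, StrictMono (v e)) ∧ Injective2 v ∧ ∀ e, edge v e = e := by
  refine ⟨fun e => e.1.orderEmbOfFin (hM.1 e e.2), fun e => OrderEmbedding.strictMono _,
    fun e f x y (h : e.1.orderEmbOfFin _ x = f.1.orderEmbOfFin _ y) => ?_,
    fun e => image_orderEmbOfFin_univ _ _⟩
  have hmem : (e : Finset ℕ).orderEmbOfFin (hM.1 e e.2) x ∈ (f : Finset ℕ) :=
    h ▸ orderEmbOfFin_mem _ _ y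
  obtain rfl : e = f := by
    by_contra hef
    exact disjoint_left.1 (hM.2 e e.2 f f.2 fun h => hef (Subtype.ext h))
      (orderEmbOfFin_mem _ _ x) hmem
  exact ⟨rfl, (e.1.orderEmbOfFin _).injective h⟩

lemma card_le_cliqueMax {M C P : Finset (Finset ℕ)} (hP : IsPattern r P) (hCM : C ⊆ M)
    (hC : IsPClique P C) : #C ≤ cliqueMax r M := by
  refine le_csSup ⟨#M, ?_⟩ ⟨P, hP, C, hCM, hC, rfl⟩
  rintro _ ⟨_, _, C', hC', _, rfl⟩
  exact card_le_card hC'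

theorem card_le_two_mul_cliqueMax_pow [NeZero r] {M : Finset (Finset ℕ)} (hM : IsMatching r M) :
    #M ≤ (2 * cliqueMax r M) ^ (2 ^ r - 1) := by
  obtain ⟨v, hv, hinj, hedge⟩ := exists_edge_eq_of_isMatching hM
  have hL (C : Finset M) (hC : IsHomogeneous v C) : #C ≤ cliqueMax r M := by
    obtain ⟨P, hP, hclique⟩ := hC.exists_isPClique hv hinj
    have hval : edge v = Subtype.val := funext hedge
    rw [hval] at hclique
    rw [← card_image_of_injective C Subtype.val_injective]
    exact card_le_cliqueMax hP (by simp [image_subset_iff]) hclique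
  simpa using card_le_two_mul_pow_of_forall_isHomogeneous hv hinj hL univ

lemma exists_cliqueMax_eq_minClique (r n : ℕ) [NeZero r] :
    ∃ M, IsOrderedMatching r n M ∧ cliqueMax r M = minClique r n :=
  have ⟨M, hM⟩ := exists_isOrderedMatching r n
  Nat.sInf_mem (s := {l | ∃ M, IsOrderedMatching r n M ∧ cliqueMax r M = l}) ⟨_, M, hM, rfl⟩

end Clique

end OrderedMatching

/-- Theorem 3.4, Sauermann–Zakharov. For all `r ≥ 2` and
`n ≥ 1`, `L_r(n) ≥ (1/2)·n^{1/(2^r-1)}`. -/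
theorem erdos_szekeres_matchings (r n : ℕ) (hr : 2 ≤ r) (hn : 1 ≤ n) :
    (1 / 2 : ℝ) * (n : ℝ) ^ ((1 : ℝ) / ((2 : ℝ) ^ r - 1)) ≤ (minClique r n : ℝ) := by
  have : NeZero r := ⟨by omega⟩
  obtain ⟨M, hM, hmin⟩ := OrderedMatching.exists_cliqueMax_eq_minClique r n
  have hbound : n ≤ (2 * minClique r n) ^ (2 ^ r - 1) := by
    simpa only [hM.2.1, hmin] using OrderedMatching.card_le_two_mul_cliqueMax_pow hM.1
  have hexp : ((2 ^ r - 1 : ℕ) : ℝ) = 2 ^ r - 1 := by simp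
  have hexp_ne : 2 ^ r - 1 ≠ 0 := Nat.sub_ne_zero_of_lt (Nat.one_lt_two_pow (by omega))
  have hroot : (n : ℝ) ^ (1 / ((2 : ℝ) ^ r - 1)) ≤ 2 * minClique r n := calc
    (n : ℝ) ^ (1 / ((2 : ℝ) ^ r - 1))
        ≤ ((2 * minClique r n : ℝ) ^ (2 ^ r - 1)) ^ (1 / ((2 : ℝ) ^ r - 1)) := by
      rw [← hexp]
      gcongr
      exact_mod_cast hbound
    _ = 2 * minClique r n := by
      rw [← hexp, one_div, Real.pow_rpow_inv_natCast (by positivity) hexp_ne]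
  linarith
end
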